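/- arXiv:2106.01155 — 4 statements merged into one kernel-verified Lean document; each statement's English description precedes it below -/
import Mathlib

section
/- Let M be a Malcev algebra over F lying in the variety H, containing L = sl2(F), and such that mL ≠ 0 for every nonzero m ∈ M, and let ⟨·,·⟩ : V × V → U be the skew-symmetric bilinear map determined by u(1)v(1) = F⟨u,v⟩, u(1)v(2) = u(2)v(1) = (1/2)H⟨u,v⟩, u(2)v(2) = E⟨u,v⟩. Then for all u, v, w, t ∈ V: (i) w⟨u,v⟩ + u⟨v,w⟩ + v⟨w,u⟩ = 0 (where x α denotes the action of the centroid element α on x ∈ M), and (ii) ⟨w,t⟩⟨u,v⟩ + ⟨u,t⟩⟨v,w⟩ + ⟨v,t⟩⟨w,u⟩ = 0 in U. -/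
/-!
The space `U` lies in the centroid `Γ(M)`: in every Malcev algebra the defect
`p(xa,y,z,b) − p(x,y,z,b)a` is a combination of values of `h`, so it vanishes in the variety `H`.
Once the values of `⟨·,·⟩` can be pulled out of products, the Malcev identity for `u(1)`, `v(1)`,
`w(1)` and `E` collapses to (i). Multiplying (i) by `t(1)` shows that the left-hand side `β` of (ii)
kills `F`; since `β` is a centroid element it then kills `H = 2EF` and `E = EH`, hence `L`. Thus
`(mβ)a = m(aβ) = 0` for all `m ∈ M` and `a ∈ L`, and `β = 0` because no nonzero element of `M` is
annihilated by `L`.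
-/

section
variable {K : Type*} [Field K] {M : Type*} [AddCommGroup M] [Module K M]

/-- the Jacobian `J(x,y,z) = (xy)z + (yz)x + (zx)y` -/
def mjac (μ : M →ₗ[K] M →ₗ[K] M) (x y z : M) : M :=
  μ (μ x y) z + μ (μ y z) x + μ (μ z x) y

/-- `{x,y,z} = (xy)z − (xz)y + 2·x(yz)` -/
def mbr (μ : M →ₗ[K] M →ₗ[K] M) (x y z : M) : M :=
  μ (μ x y) z - μ (μ x z) y + (2 : K) • μ x (μ y z)

/-- `h(y,z,t,x,u) = {yz,t,u}x + {yz,t,x}u + {yx,z,u}t + {yu,z,x}t` -/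
def mh (μ : M →ₗ[K] M →ₗ[K] M) (y z t x u : M) : M :=
  μ (mbr μ (μ y z) t u) x + μ (mbr μ (μ y z) t x) u +
    μ (mbr μ (μ y x) z u) t + μ (mbr μ (μ y u) z x) t

/-- A Malcev algebra structure: anticommutative (`x·x = 0`) together with the Malcev
identity `(xz)(yt) = ((xy)z)t + ((yz)t)x + ((zt)x)y + ((tx)y)z`. -/
def IsMalcev (μ : M →ₗ[K] M →ₗ[K] M) : Prop :=
  (∀ x, μ x x = 0) ∧
    ∀ x y z t, μ (μ x z) (μ y t) =
      μ (μ (μ x y) z) t + μ (μ (μ y z) t) x + μ (μ (μ z t) x) y + μ (μ (μ t x) y) z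

/-- the variety 𝓗 : `h(y,z,t,x,u) = 0` identically -/
def InVarietyH (μ : M →ₗ[K] M →ₗ[K] M) : Prop := ∀ y z t x u, mh μ y z t x u = 0

/-- `N_M = {m | J(m,a,b) = 0 ∀ a,b ∈ L}` -/
def NMset (μ : M →ₗ[K] M →ₗ[K] M) (L : Submodule K M) : Set M :=
  {m : M | ∀ a ∈ L, ∀ b ∈ L, mjac μ m a b = 0}

/-- `J_M = {m | {m,a,b} = 0 ∀ a,b ∈ L}` -/
def JMset (μ : M →ₗ[K] M →ₗ[K] M) (L : Submodule K M) : Set M :=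
  {m : M | ∀ a ∈ L, ∀ b ∈ L, mbr μ m a b = 0}

/-- the centroid Γ(M): linear operators commuting with all multiplications -/
def centroid (μ : M →ₗ[K] M →ₗ[K] M) : Set (Module.End K M) :=
  {α | ∀ x y : M, α (μ x y) = μ x (α y) ∧ α (μ x y) = μ (α x) y}

/-- `p(x,y,z,t) = −{zt,x,y} − {yt,z,x} + {xt,y,z}` -/
def pfun (μ : M →ₗ[K] M →ₗ[K] M) (x y z t : M) : M :=
  -(mbr μ (μ z t) x y) - mbr μ (μ y t) z x + mbr μ (μ x t) y z

/-- `U`: the span of the operators `α(y,a,b) : x ↦ p(x,y,a,b)` with `y ∈ M`, `a,b ∈ L` -/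
def Uspan (μ : M →ₗ[K] M →ₗ[K] M) (L : Submodule K M) : Submodule K (Module.End K M) :=
  Submodule.span K {φ : Module.End K M | ∃ y : M, ∃ a ∈ L, ∃ b ∈ L, ∀ x, φ x = pfun μ x y a b}

/-- `N_M = L·U`: the span of the elements `aα`, `a ∈ L`, `α ∈ U` -/
def NMspan (μ : M →ₗ[K] M →ₗ[K] M) (L : Submodule K M) : Submodule K M :=
  Submodule.span K {m : M | ∃ a ∈ L, ∃ φ ∈ Uspan μ L, m = φ a}

/-- the linear operator `m ↦ J(m,a,b)` -/
def jop (μ : M →ₗ[K] M →ₗ[K] M) (a b : M) : M →ₗ[K] M :=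
  μ.flip b ∘ₗ μ.flip a + μ (μ a b) + μ.flip a ∘ₗ μ b

/-- the linear operator `m ↦ {m,a,b}` -/
def bop (μ : M →ₗ[K] M →ₗ[K] M) (a b : M) : M →ₗ[K] M :=
  μ.flip b ∘ₗ μ.flip a - μ.flip a ∘ₗ μ.flip b + (2 : K) • μ.flip (μ a b)

/-- `N_M` as a submodule (intersection of the kernels of `m ↦ J(m,a,b)`, `a,b ∈ L`) -/
def NMker (μ : M →ₗ[K] M →ₗ[K] M) (L : Submodule K M) : Submodule K M :=
  ⨅ (a : M) (_ : a ∈ L) (b : M) (_ : b ∈ L), LinearMap.ker (jop μ a b)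

/-- `J_M` as a submodule (intersection of the kernels of `m ↦ {m,a,b}`, `a,b ∈ L`) -/
def JMker (μ : M →ₗ[K] M →ₗ[K] M) (L : Submodule K M) : Submodule K M :=
  ⨅ (a : M) (_ : a ∈ L) (b : M) (_ : b ∈ L), LinearMap.ker (bop μ a b)

/-- `Ann_M L` as a set -/
def AnnSet (μ : M →ₗ[K] M →ₗ[K] M) (L : Submodule K M) : Set M :=
  {m : M | ∀ a ∈ L, μ m a = 0}

/-- `Ann_M L` as a submodule -/
def Annker (μ : M →ₗ[K] M →ₗ[K] M) (L : Submodule K M) : Submodule K M :=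
  ⨅ (a : M) (_ : a ∈ L), LinearMap.ker (μ.flip a)

/-- `V = {w ∈ J_M : wH = w, wF = 0}` as a set -/
def Vset (μ : M →ₗ[K] M →ₗ[K] M) (L : Submodule K M) (Hm Fm : M) : Set M :=
  {w : M | w ∈ JMset μ L ∧ μ w Hm = w ∧ μ w Fm = 0}

/-- `V = {w ∈ J_M : wH = w, wF = 0}` as a submodule -/
def Vsub (μ : M →ₗ[K] M →ₗ[K] M) (L : Submodule K M) (Hm Fm : M) : Submodule K M :=
  JMker μ L ⊓ LinearMap.ker (μ.flip Hm - LinearMap.id) ⊓ LinearMap.ker (μ.flip Fm)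

lemma IsMalcev.skew {μ : M →ₗ[K] M →ₗ[K] M} (hMal : IsMalcev μ) (x y : M) :
    μ x y = -μ y x :=
  (LinearMap.IsAlt.neg hMal.1 y x).symm

/-- The linearization in `x` of Sagle's form `J(x,y,xz) = J(x,y,z)x` of the Malcev identity. -/
lemma IsMalcev.mjac_mul_add_mjac_mul {μ : M →ₗ[K] M →ₗ[K] M} (hMal : IsMalcev μ)
    (x w y z : M) :
    mjac μ x y (μ w z) + mjac μ w y (μ x z) = μ (mjac μ x y z) w + μ (mjac μ w y z) x := by
  have hs := hMal.skew
  linear_combination (norm := skip) hMal.2 x y z w + hMal.2 x w y z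
  simp only [mjac, map_add, LinearMap.add_apply]
  grind

lemma IsMalcev.pfun_mul {μ : M →ₗ[K] M →ₗ[K] M} (hMal : IsMalcev μ) (a b x y z : M) :
    pfun μ (μ x a) y z b =
      μ (pfun μ x y z b) a + mh μ x b z a y - mh μ b a y x z + mh μ y z a b x := by
  have hs := hMal.skew
  -- The coefficients solve a linear system in the multilinear part of degree 5 of the free
  -- anticommutative algebra, where both sides have to agree.
  linear_combination (norm := skip)
    hMal.mjac_mul_add_mjac_mul z a (μ x y) b + hMal.mjac_mul_add_mjac_mul (μ x a) y b z
      + hMal.mjac_mul_add_mjac_mul (μ x a) b z y + hMal.mjac_mul_add_mjac_mul x b (μ y z) a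
      - hMal.mjac_mul_add_mjac_mul y a (μ z b) x + hMal.mjac_mul_add_mjac_mul x z (μ a b) y
  simp only [mjac, pfun, mh, mbr, map_add, map_sub, map_neg, two_smul, LinearMap.add_apply,
    LinearMap.sub_apply, LinearMap.neg_apply]
  grind

lemma pfun_mul_of_inVarietyH {μ : M →ₗ[K] M →ₗ[K] M} (hMal : IsMalcev μ) (hVarH : InVarietyH μ)
    (a b x y z : M) : pfun μ (μ x a) y z b = μ (pfun μ x y z b) a := by
  rw [hMal.pfun_mul, hVarH, hVarH, hVarH, add_zero, sub_zero, add_zero]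

/-- The centroid `Γ(M)` as a subalgebra of the algebra of linear operators on `M`. -/
def centroidSubalgebra (μ : M →ₗ[K] M →ₗ[K] M) : Subalgebra K (Module.End K M) where
  carrier := centroid μ
  mul_mem' hα hγ x y := by
    simp only [Module.End.mul_apply]
    exact ⟨by rw [(hγ x y).1, (hα _ _).1], by rw [(hγ x y).2, (hα _ _).2]⟩
  add_mem' hα hγ x y := by
    simp only [LinearMap.add_apply, map_add]
    exact ⟨by rw [(hα x y).1, (hγ x y).1], by rw [(hα x y).2, (hγ x y).2]⟩
  algebraMap_mem' c x y := by simp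

lemma Uspan_le_centroidSubalgebra {μ : M →ₗ[K] M →ₗ[K] M} (hMal : IsMalcev μ)
    (hVarH : InVarietyH μ) (L : Submodule K M) :
    Uspan μ L ≤ (centroidSubalgebra μ).toSubmodule := by
  refine Submodule.span_le.2 ?_
  rintro φ ⟨y, a, -, b, -, hφ⟩
  have hmul (x c : M) : φ (μ x c) = μ (φ x) c := by
    rw [hφ, hφ, pfun_mul_of_inVarietyH hMal hVarH]
  exact fun x c => ⟨by rw [hMal.skew x c, map_neg, hmul, ← hMal.skew], hmul x c⟩

section Centroid

variable {μ : M →ₗ[K] M →ₗ[K] M} {α γ : Module.End K M}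

lemma centroid_apply_comm_mul (hα : α ∈ centroid μ) (hγ : γ ∈ centroid μ) (x y : M) :
    α (γ (μ x y)) = γ (α (μ x y)) := by
  rw [(hγ x y).1, (hα _ _).2, (hα x y).2, (hγ _ _).1]

lemma eq_zero_of_mem_centroid_of_forall_mem {S : Set M} (hα : α ∈ centroid μ)
    (hfaith : ∀ m : M, m ≠ 0 → ∃ a ∈ S, μ m a ≠ 0) (hS : ∀ a ∈ S, α a = 0) : α = 0 := by
  ext m
  by_contra hm
  obtain ⟨a, ha, hma⟩ := hfaith (α m) hm
  exact hma (by rw [← (hα m a).2, (hα m a).1, hS a ha, map_zero])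

lemma span_le_ker_of_mem_centroid {E H F : M} (h2 : (2 : K) ≠ 0) (hEH : μ E H = E)
    (hEF : μ E F = (2⁻¹ : K) • H) (hα : α ∈ centroid μ) (hF : α F = 0) :
    Submodule.span K {E, H, F} ≤ LinearMap.ker α := by
  have hH : α H = 0 := by
    have h : (2⁻¹ : K) • α H = 0 := by rw [← map_smul, ← hEF, (hα E F).1, hF, map_zero]
    exact (smul_eq_zero.1 h).resolve_left (inv_ne_zero h2)
  have hE : α E = 0 := by rw [← hEH, (hα E H).1, hH, map_zero]
  rw [Submodule.span_le]
  rintro x (rfl | rfl | rfl) <;> assumption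

end Centroid

lemma mul_mul_of_mem_Vset {μ : M →ₗ[K] M →ₗ[K] M} {L : Submodule K M} {E H F v : M}
    (h2 : (2 : K) ≠ 0) (hMal : IsMalcev μ) (hEF : μ E F = (2⁻¹ : K) • H) (hE : E ∈ L) (hF : F ∈ L)
    (hv : v ∈ Vset μ L H F) : μ F (μ v E) = v := by
  obtain ⟨hJ, hvH, hvF⟩ := hv
  have hvEF : μ (μ v E) F + v = 0 := by
    simpa only [mbr, hvF, hEF, map_smul, hvH, map_zero, LinearMap.zero_apply, sub_zero,
      smul_inv_smul₀ h2] using hJ E hE F hF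
  rw [hMal.skew, eq_neg_of_add_eq_zero_left hvEF, neg_neg]

/-- `α` is the value `⟨u,v⟩` of the skew form on `V`: a centroid element with `u(1)v(1) = Fα` and
`u(2)v(1) = ½Hα`. Asking for `α ∈ Γ(M)` rather than `α ∈ U` makes sense of the form outside the
variety `H`. -/
structure IsFormValue (μ : M →ₗ[K] M →ₗ[K] M) (E H F u v : M) (α : Module.End K M) : Prop where
  mem_centroid : α ∈ centroid μ
  mul_eq : μ u v = α F
  mul_E_mul_eq : μ (μ u E) v = (2⁻¹ : K) • α H

namespace IsFormValue

variable {μ : M →ₗ[K] M →ₗ[K] M} {L : Submodule K M} {E H F u v w t : M}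
  {α β γ : Module.End K M}

lemma mul_mul (h : IsFormValue μ E H F u v α) (x : M) : μ (μ u v) x = α (μ F x) := by
  rw [h.mul_eq, (h.mem_centroid F x).2]

lemma mul_E_mul_mul (h : IsFormValue μ E H F u v α) (x : M) :
    μ (μ (μ u E) v) x = (2⁻¹ : K) • α (μ H x) := by
  rw [h.mul_E_mul_eq, map_smul, LinearMap.smul_apply, (h.mem_centroid H x).2]

lemma mul_mul_E_mul (h : IsFormValue μ E H F u v α) (hMal : IsMalcev μ)
    (hEF : μ E F = (2⁻¹ : K) • H) (x : M) :
    μ (μ (μ u v) E) x = -((2⁻¹ : K) • α (μ H x)) := by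
  rw [h.mul_mul, hMal.skew F E, hEF, ← (h.mem_centroid _ x).2, map_neg, LinearMap.neg_apply,
    map_neg, map_smul, LinearMap.smul_apply, map_smul]

theorem cyclic_sum_apply_eq_zero (h2 : (2 : K) ≠ 0) (hMal : IsMalcev μ)
    (hEF : μ E F = (2⁻¹ : K) • H) (hE : E ∈ L) (hF : F ∈ L) (hu : u ∈ Vset μ L H F)
    (hv : v ∈ Vset μ L H F) (hw : w ∈ Vset μ L H F) (hα : IsFormValue μ E H F u v α)
    (hβ : IsFormValue μ E H F v w β) (hγ : IsFormValue μ E H F w u γ) :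
    α w + β u + γ v = 0 := by
  have hFw : μ F w = 0 := by rw [hMal.skew, hw.2.2, neg_zero]
  have hH {x : M} (hx : x ∈ Vset μ L H F) : μ H x = -x := by rw [hMal.skew, hx.2.1]
  have lhs : μ (μ u w) (μ v E) = -γ v := by
    rw [hMal.skew u w, map_neg, LinearMap.neg_apply, hγ.mul_mul,
      mul_mul_of_mem_Vset h2 hMal hEF hE hF hv]
  have term₁ : μ (μ (μ u v) w) E = 0 := by
    rw [hα.mul_mul, hFw, map_zero, map_zero, LinearMap.zero_apply]
  have term₂ : μ (μ (μ v w) E) u = (2⁻¹ : K) • β u := by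
    rw [hβ.mul_mul_E_mul hMal hEF, hH hu, map_neg, smul_neg, neg_neg]
  have term₃ : μ (μ (μ w E) u) v = -((2⁻¹ : K) • γ v) := by
    rw [hγ.mul_E_mul_mul, hH hv, map_neg, smul_neg]
  have term₄ : μ (μ (μ E u) v) w = (2⁻¹ : K) • α w := by
    rw [hMal.skew E u, map_neg, LinearMap.neg_apply, map_neg, LinearMap.neg_apply,
      hα.mul_E_mul_mul, hH hw, map_neg, smul_neg, neg_neg]
  have malcev := hMal.2 u v w E
  rw [lhs, term₁, term₂, term₃, term₄] at malcev
  linear_combination (norm := skip) (-2 : K) • malcev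
  match_scalars <;> field_simp <;> ring

theorem cyclic_sum_mul_eq_zero {α' β' γ' : Module.End K M} (h2 : (2 : K) ≠ 0)
    (hEH : μ E H = E) (hFH : μ F H = -F) (hEF : μ E F = (2⁻¹ : K) • H)
    (hfaith : ∀ m : M, m ≠ 0 → ∃ a ∈ Submodule.span K {E, H, F}, μ m a ≠ 0)
    (hα : α ∈ centroid μ) (hβ : β ∈ centroid μ) (hγ : γ ∈ centroid μ)
    (hsum : α w + β u + γ v = 0) (hα' : IsFormValue μ E H F w t α')
    (hβ' : IsFormValue μ E H F u t β') (hγ' : IsFormValue μ E H F v t γ') :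
    α' * α + β' * β + γ' * γ = 0 := by
  have hmem : α' * α + β' * β + γ' * γ ∈ centroidSubalgebra μ :=
    add_mem (add_mem (mul_mem hα'.mem_centroid hα) (mul_mem hβ'.mem_centroid hβ))
      (mul_mem hγ'.mem_centroid hγ)
  have hval {x : M} {δ δ' : Module.End K M} (hδ : δ ∈ centroid μ)
      (hδ' : IsFormValue μ E H F x t δ') : (δ' * δ) F = μ (δ x) t := by
    have hF : F = μ (-F) H := by rw [map_neg, LinearMap.neg_apply, hFH, neg_neg]
    have hcomm : δ' (δ F) = δ (δ' F) := by
      rw [hF, centroid_apply_comm_mul hδ'.mem_centroid hδ]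
    rw [Module.End.mul_apply, hcomm, ← hδ'.mul_eq, (hδ x t).2]
  have hF : (α' * α + β' * β + γ' * γ) F = 0 := by
    rw [LinearMap.add_apply, LinearMap.add_apply, hval hα hα', hval hβ hβ', hval hγ hγ',
      ← LinearMap.add_apply, ← LinearMap.add_apply, ← map_add, ← map_add, hsum, map_zero,
      LinearMap.zero_apply]
  exact eq_zero_of_mem_centroid_of_forall_mem hmem hfaith
    (span_le_ker_of_mem_centroid h2 hEH hEF hmem hF)

end IsFormValue

theorem stmt8_general
    (h2 : (2 : K) ≠ 0) (μ : M →ₗ[K] M →ₗ[K] M) (hMal : IsMalcev μ)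
    (E H F : M) (hEH : μ E H = E) (hFH : μ F H = -F) (hEF : μ E F = (2⁻¹ : K) • H)
    (L : Submodule K M) (hL : L = Submodule.span K {E, H, F})
    (hfaith : ∀ m : M, m ≠ 0 → ∃ a ∈ L, μ m a ≠ 0)
    (bk : M → M → Module.End K M)
    (hbk : ∀ u ∈ Vset μ L H F, ∀ v ∈ Vset μ L H F, IsFormValue μ E H F u v (bk u v)) :
    (∀ u ∈ Vset μ L H F, ∀ v ∈ Vset μ L H F, ∀ w ∈ Vset μ L H F,
      bk u v w + bk v w u + bk w u v = 0) ∧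
    (∀ u ∈ Vset μ L H F, ∀ v ∈ Vset μ L H F, ∀ w ∈ Vset μ L H F, ∀ t ∈ Vset μ L H F,
      bk w t * bk u v + bk u t * bk v w + bk v t * bk w u = 0) := by
  have hE : E ∈ L := hL ▸ Submodule.subset_span (by simp)
  have hF : F ∈ L := hL ▸ Submodule.subset_span (by simp)
  have hsum (u) (hu : u ∈ Vset μ L H F) (v) (hv : v ∈ Vset μ L H F) (w)
      (hw : w ∈ Vset μ L H F) : bk u v w + bk v w u + bk w u v = 0 :=
    IsFormValue.cyclic_sum_apply_eq_zero h2 hMal hEF hE hF hu hv hw (hbk u hu v hv) (hbk v hv w hw)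
      (hbk w hw u hu)
  exact ⟨hsum, fun u hu v hv w hw t ht =>
    IsFormValue.cyclic_sum_mul_eq_zero h2 hEH hFH hEF (hL ▸ hfaith) (hbk u hu v hv).mem_centroid
      (hbk v hv w hw).mem_centroid (hbk w hw u hu).mem_centroid (hsum u hu v hv w hw)
      (hbk w hw t ht) (hbk u hu t ht) (hbk v hv t ht)⟩

/-- For the skew-symmetric bilinear map `⟨·,·⟩ : V × V → U`
determined by `u(1)v(1) = F⟨u,v⟩`, `u(1)v(2) = u(2)v(1) = ½H⟨u,v⟩`,
`u(2)v(2) = E⟨u,v⟩`, one has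
(i) `w⟨u,v⟩ + u⟨v,w⟩ + v⟨w,u⟩ = 0` and
(ii) `⟨w,t⟩⟨u,v⟩ + ⟨u,t⟩⟨v,w⟩ + ⟨v,t⟩⟨w,u⟩ = 0`. -/
theorem stmt8
    (h2 : (2 : K) ≠ 0) (h3 : (3 : K) ≠ 0)
    (μ : M →ₗ[K] M →ₗ[K] M) (hMal : IsMalcev μ) (hVarH : InVarietyH μ)
    (E H F : M) (hind : LinearIndependent K ![E, H, F])
    (hEH : μ E H = E) (hFH : μ F H = -F) (hEF : μ E F = (2⁻¹ : K) • H)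
    (L : Submodule K M) (hL : L = Submodule.span K {E, H, F})
    (hfaith : ∀ m : M, m ≠ 0 → ∃ a ∈ L, μ m a ≠ 0)
    (bk : M → M → Module.End K M)
    (hbk : ∀ u ∈ Vset μ L H F, ∀ v ∈ Vset μ L H F,
      bk u v ∈ Uspan μ L ∧
      μ u v = bk u v F ∧
      μ u (μ v E) = (2⁻¹ : K) • (bk u v H) ∧
      μ (μ u E) v = (2⁻¹ : K) • (bk u v H) ∧
      μ (μ u E) (μ v E) = bk u v E)
    (hskew : ∀ u ∈ Vset μ L H F, ∀ v ∈ Vset μ L H F, bk u v = -(bk v u))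
    (hadd : ∀ u ∈ Vset μ L H F, ∀ u' ∈ Vset μ L H F, ∀ v ∈ Vset μ L H F,
      bk (u + u') v = bk u v + bk u' v)
    (hsmul : ∀ (c : K), ∀ u ∈ Vset μ L H F, ∀ v ∈ Vset μ L H F, bk (c • u) v = c • bk u v) :
    (∀ u ∈ Vset μ L H F, ∀ v ∈ Vset μ L H F, ∀ w ∈ Vset μ L H F,
      bk u v w + bk v w u + bk w u v = 0) ∧
    (∀ u ∈ Vset μ L H F, ∀ v ∈ Vset μ L H F, ∀ w ∈ Vset μ L H F, ∀ t ∈ Vset μ L H F,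
      bk w t * bk u v + bk u t * bk v w + bk v t * bk w u = 0) :=
  stmt8_general h2 μ hMal E H F hEH hFH hEF L hL hfaith bk fun u hu v hv =>
    have ⟨hU, huv, _, huEv, _⟩ := hbk u hu v hv
    ⟨Uspan_le_centroidSubalgebra hMal hVarH L hU, huv, huEv⟩

end
end

section
/- Let B be a unital commutative associative algebra over F, V a B-module, and ⟨·,·⟩ : V × V → B a skew-symmetric B-bilinear map such that w⟨u,v⟩ + u⟨v,w⟩ + v⟨w,u⟩ = 0 for all u,v,w ∈ V. Then the algebra M = sl2(B) ⊕ V² with the product defined in the construction is a Malcev algebra over F (its product is anticommutative with X·X = 0 and satisfies the Malcev identity (XZ)(YT) = ((XY)Z)T + ((YZ)T)X + ((ZT)X)Y + ((TX)Y)Z), and it contains sl2(B) (in particular sl2(F)) as a subalgebra. -/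
section
variable (K : Type*) [Field K] (B : Type*) [CommRing B] [Algebra K B]

/-- `sl2(B)`: trace-zero 2×2 matrices over `B` -/
def sl2T (B : Type*) [CommRing B] : Submodule B (Matrix (Fin 2) (Fin 2) B) :=
  LinearMap.ker (Matrix.traceLinearMap (Fin 2) B B)

lemma comm_mem_sl2T {B : Type*} [CommRing B] (A A' : Matrix (Fin 2) (Fin 2) B) :
    A * A' - A' * A ∈ sl2T B := by
  rw [sl2T, LinearMap.mem_ker, Matrix.traceLinearMap_apply, Matrix.trace_sub,
    Matrix.trace_mul_comm, sub_self]

variable (V : Type*) [AddCommGroup V] [Module B V]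

/-- the right action `(u,v)A = (au − bv, cu − av)` for `A = (1/2)[[a,−b],[c,−a]]` -/
def actV {B V : Type*} [CommRing B] [AddCommGroup V] [Module B V]
    (A : Matrix (Fin 2) (Fin 2) B) (p : V × V) : V × V :=
  ((2 : B) • (A 0 0 • p.1 + A 0 1 • p.2), (2 : B) • (A 1 0 • p.1 - A 0 0 • p.2))

/-- the `sl2(B)`-component of the product on `sl2(B) ⊕ V²` -/
noncomputable def conMulMat (bk : V → V → B)
    (X Y : ↥(sl2T B) × V × V) : Matrix (Fin 2) (Fin 2) B :=
  (X.1 : Matrix (Fin 2) (Fin 2) B) * (Y.1 : Matrix (Fin 2) (Fin 2) B) -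
    (Y.1 : Matrix (Fin 2) (Fin 2) B) * (X.1 : Matrix (Fin 2) (Fin 2) B) +
    algebraMap K B 2⁻¹ •
      !![algebraMap K B 2⁻¹ * (bk X.2.1 Y.2.2 + bk X.2.2 Y.2.1), -(bk X.2.1 Y.2.1);
         bk X.2.2 Y.2.2, -(algebraMap K B 2⁻¹ * (bk X.2.1 Y.2.2 + bk X.2.2 Y.2.1))]

lemma conMulMat_mem (bk : V → V → B) (X Y : ↥(sl2T B) × V × V) :
    conMulMat K B V bk X Y ∈ sl2T B := by
  rw [sl2T, LinearMap.mem_ker, Matrix.traceLinearMap_apply, conMulMat, Matrix.trace_add,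
    Matrix.trace_sub, Matrix.trace_mul_comm, Matrix.trace_smul, Matrix.trace_fin_two]
  simp

/-- the product of the construction `sl2(B) ⊕ V²` -/
noncomputable def conMul (bk : V → V → B) (X Y : ↥(sl2T B) × V × V) :
    ↥(sl2T B) × V × V :=
  (⟨conMulMat K B V bk X Y, conMulMat_mem K B V bk X Y⟩,
    actV (Y.1 : Matrix (Fin 2) (Fin 2) B) X.2 - actV (X.1 : Matrix (Fin 2) (Fin 2) B) Y.2)

/-- the symplectic involution on `M₂(B)` -/
def sympl {B : Type*} [CommRing B] (A : Matrix (Fin 2) (Fin 2) B) : Matrix (Fin 2) (Fin 2) B :=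
  !![A 1 1, -(A 0 1); -(A 1 0), A 0 0]

/-- the `sl2(B)`-component of the product of `M̃(sl2(B), α)` -/
def mtMulMat {B : Type*} [CommRing B] (α : B)
    (X Y : ↥(sl2T B) × Matrix (Fin 2) (Fin 2) B) : Matrix (Fin 2) (Fin 2) B :=
  (X.1 : Matrix (Fin 2) (Fin 2) B) * (Y.1 : Matrix (Fin 2) (Fin 2) B) -
    (Y.1 : Matrix (Fin 2) (Fin 2) B) * (X.1 : Matrix (Fin 2) (Fin 2) B) +
    α • (Y.2 * sympl X.2 - X.2 * sympl Y.2)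

lemma mtMulMat_mem {B : Type*} [CommRing B] (α : B)
    (X Y : ↥(sl2T B) × Matrix (Fin 2) (Fin 2) B) : mtMulMat α X Y ∈ sl2T B := by
  have h2 : Matrix.trace (α • (Y.2 * sympl X.2 - X.2 * sympl Y.2)) = 0 := by
    rw [Matrix.trace_smul, Matrix.trace_sub, Matrix.trace_fin_two, Matrix.trace_fin_two]
    simp [Matrix.mul_apply, Fin.sum_univ_two, sympl]
    ring_nf
  rw [sl2T, LinearMap.mem_ker, Matrix.traceLinearMap_apply, mtMulMat, Matrix.trace_add,
    Matrix.trace_sub, Matrix.trace_mul_comm, sub_self, zero_add, h2]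

/-- the product of `M̃(sl2(B), α) = sl2(B) ⊕ vM₂(B)`:
`A·B = AB − BA`, `A·(vB) = v(A*B − AB)`, `(vA)·(vB) = α(BA* − AB*)`. -/
def mtMul {B : Type*} [CommRing B] (α : B)
    (X Y : ↥(sl2T B) × Matrix (Fin 2) (Fin 2) B) :
    ↥(sl2T B) × Matrix (Fin 2) (Fin 2) B :=
  (⟨mtMulMat α X Y, mtMulMat_mem α X Y⟩,
    sympl (X.1 : Matrix (Fin 2) (Fin 2) B) * Y.2 - (X.1 : Matrix (Fin 2) (Fin 2) B) * Y.2 +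
      ((Y.1 : Matrix (Fin 2) (Fin 2) B) * X.2 - sympl (Y.1 : Matrix (Fin 2) (Fin 2) B) * X.2))

/-- the product of the exceptional Malcev algebra `M₇(B) = sl2(B) ⊕ vM₂(B)` -/
def m7Mul {B : Type*} [CommRing B] (X Y : ↥(sl2T B) × Matrix (Fin 2) (Fin 2) B) :
    ↥(sl2T B) × Matrix (Fin 2) (Fin 2) B := mtMul (1 : B) X Y


section
variable {K : Type*} [Field K] {B : Type*} [CommRing B] [Algebra K B]
  {V : Type*} [AddCommGroup V] [Module B V] [Module K V] [IsScalarTower K B V]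

/-!
The symplectic involution `*` makes `M₂(B)` an algebra with involution in which every `a + a*` is
central, and `sl₂(B)` is its space of skew elements. It acts on column vectors `Fin 2 → V`, and
`h(u, v) = (1/4) (β(uᵢ, (Jv)ⱼ))ᵢⱼ` with `Jv = (v₁, -v₀)` is a hermitian form there, because `β` is
skew. The cyclic condition on `β` becomes `h(u, v)w + h(u, w)v = (h(v, w) + h(w, v))u`, and the
product of the construction is
`(a, u)(b, v) = ([a, b] + h(u, v) - h(v, u), 2(bu - av))`.
In this form the Malcev identity holds for every ring with such an involution and every such `h`.
The product is graded by parity and the identity is multilinear and, for a skew-symmetric product,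
invariant under cyclic rotation of its arguments, so it suffices to check one homogeneous quadruple
for each of the six cyclic patterns. Each check needs only the cyclic identity and the centrality
of the elements `a + a*`.
-/

open scoped Pointwise

section

variable {M : Type*} [AddCommGroup M]

/-- The difference of the two sides of the Malcev identity
`(XZ)(YT) = ((XY)Z)T + ((YZ)T)X + ((ZT)X)Y + ((TX)Y)Z` for the product `μ`. -/
def malcevDefect (μ : M → M → M) (X Y Z T : M) : M :=
  μ (μ (μ X Y) Z) T + μ (μ (μ Y Z) T) X + μ (μ (μ Z T) X) Y + μ (μ (μ T X) Y) Z -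
    μ (μ X Z) (μ Y T)

variable {μ : M → M → M}

lemma malcevDefect_rotate (hskew : ∀ X Y, μ X Y = -μ Y X)
    (hadd : ∀ X Y Z, μ X Z + μ Y Z = μ (X + Y) Z) (X Y Z T : M) :
    malcevDefect μ Y Z T X = malcevDefect μ X Y Z T := by
  let l (Z : M) : M →+ M := AddMonoidHom.mk' (μ · Z) fun X Y ↦ (hadd X Y Z).symm
  have hneg (X Z : M) : μ (-X) Z = -μ X Z := map_neg (l Z) X
  have h : μ (μ Y T) (μ Z X) = μ (μ X Z) (μ Y T) := by
    rw [hskew (μ Y T), hskew Z X, hneg, neg_neg]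
  rw [malcevDefect, malcevDefect, h]
  abel

lemma malcevDefect_add_left (hskew : ∀ X Y, μ X Y = -μ Y X)
    (hadd : ∀ X Y Z, μ X Z + μ Y Z = μ (X + Y) Z) (X X' Y Z T : M) :
    malcevDefect μ (X + X') Y Z T = malcevDefect μ X Y Z T + malcevDefect μ X' Y Z T := by
  have hadd' (X Y Z : M) : μ X (Y + Z) = μ X Y + μ X Z := by
    rw [hskew, ← hadd, hskew Y, hskew Z, ← neg_add, neg_neg]
  simp only [malcevDefect, ← hadd, hadd']
  abel

theorem malcevDefect_eq_zero_of_mem_add (hskew : ∀ X Y, μ X Y = -μ Y X)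
    (hadd : ∀ X Y Z, μ X Z + μ Y Z = μ (X + Y) Z) {E O : Set M}
    (h₀ : ∀ ⦃a⦄, a ∈ E → ∀ ⦃b⦄, b ∈ E → ∀ ⦃c⦄, c ∈ E → ∀ ⦃d⦄, d ∈ E → malcevDefect μ a b c d = 0)
    (h₁ : ∀ ⦃u⦄, u ∈ O → ∀ ⦃a⦄, a ∈ E → ∀ ⦃b⦄, b ∈ E → ∀ ⦃c⦄, c ∈ E → malcevDefect μ u a b c = 0)
    (h₂ : ∀ ⦃u⦄, u ∈ O → ∀ ⦃v⦄, v ∈ O → ∀ ⦃a⦄, a ∈ E → ∀ ⦃b⦄, b ∈ E → malcevDefect μ u v a b = 0)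
    (h₂' : ∀ ⦃u⦄, u ∈ O → ∀ ⦃a⦄, a ∈ E → ∀ ⦃v⦄, v ∈ O → ∀ ⦃b⦄, b ∈ E → malcevDefect μ u a v b = 0)
    (h₃ : ∀ ⦃u⦄, u ∈ O → ∀ ⦃v⦄, v ∈ O → ∀ ⦃w⦄, w ∈ O → ∀ ⦃a⦄, a ∈ E → malcevDefect μ u v w a = 0)
    (h₄ : ∀ ⦃u⦄, u ∈ O → ∀ ⦃v⦄, v ∈ O → ∀ ⦃w⦄, w ∈ O → ∀ ⦃t⦄, t ∈ O → malcevDefect μ u v w t = 0)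
    {X Y Z T : M} (hX : X ∈ E + O) (hY : Y ∈ E + O) (hZ : Z ∈ E + O) (hT : T ∈ E + O) :
    malcevDefect μ X Y Z T = 0 := by
  have rot {X Y Z T : M} : malcevDefect μ Y Z T X = 0 → malcevDefect μ X Y Z T = 0 :=
    (malcevDefect_rotate hskew hadd X Y Z T).symm.trans
  have homogeneous : ∀ X ∈ E ∪ O, ∀ Y ∈ E ∪ O, ∀ Z ∈ E ∪ O, ∀ T ∈ E ∪ O,
      malcevDefect μ X Y Z T = 0 := by
    -- The sixteen parity patterns fall into six orbits under cyclic rotation.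
    rintro X (hX | hX) Y (hY | hY) Z (hZ | hZ) T (hT | hT)
    exacts [h₀ hX hY hZ hT, rot (rot (rot (h₁ hT hX hY hZ))), rot (rot (h₁ hZ hT hX hY)),
      rot (rot (h₂ hZ hT hX hY)), rot (h₁ hY hZ hT hX), rot (h₂' hY hZ hT hX),
      rot (h₂ hY hZ hT hX), rot (h₃ hY hZ hT hX), h₁ hX hY hZ hT,
      rot (rot (rot (h₂ hT hX hY hZ))), h₂' hX hY hZ hT, rot (rot (h₃ hZ hT hX hY)),
      h₂ hX hY hZ hT, rot (rot (rot (h₃ hT hX hY hZ))), h₃ hX hY hZ hT, h₄ hX hY hZ hT]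
  have extend {Y Z T : M} (h : ∀ X ∈ E ∪ O, malcevDefect μ X Y Z T = 0) {X : M}
      (hX : X ∈ E + O) : malcevDefect μ X Y Z T = 0 := by
    obtain ⟨a, ha, u, hu, rfl⟩ := hX
    rw [malcevDefect_add_left hskew hadd, h a (.inl ha), h u (.inr hu), add_zero]
  exact extend (fun X hX ↦ rot <| extend (fun Y hY ↦ rot <| extend (fun Z hZ ↦ rot <|
    extend (fun T hT ↦ rot <| homogeneous X hX Y hY Z hZ T hT) hT) hZ) hY) hX

end

/-- A biadditive form `h` on a module over a ring with involution which is hermitian, linear in its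
first argument, and satisfies `h(u, v)w + h(u, w)v = (h(v, w) + h(w, v))u`. Centrality of the
traces `a + a*` in the ring is bundled with these conditions on `h`, as together they make
`hermitianMul h` a Malcev product. -/
structure IsCyclicHermitian {A W : Type*} [Ring A] [StarRing A] [AddCommGroup W] [Module A W]
    (h : W →+ W →+ A) : Prop where
  add_star_commute : ∀ a b : A, Commute (a + star a) b
  smul_left : ∀ (a : A) (u v : W), h (a • u) v = a * h u v
  star_apply : ∀ u v : W, star (h u v) = h v u
  cyclic : ∀ u v w : W, h u v • w + h u w • v = (h v w + h w v) • u

section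

variable {A W : Type*} [Ring A] [AddCommGroup W] [Module A W] (h : W →+ W →+ A)
  (a b : A) (u v : W)

/-- The skew-symmetric product `(a, u)(b, v) = ([a, b] + h(u, v) - h(v, u), 2(bu - av))` built from
a form `h`. It is defined on all of `A × W`; it is a Malcev product on the pairs whose first
component is skew with respect to the involution. -/
def hermitianMul (X Y : A × W) : A × W :=
  (X.1 * Y.1 - Y.1 * X.1 + (h X.2 Y.2 - h Y.2 X.2), 2 • (Y.1 • X.2 - X.1 • Y.2))

lemma hermitianMul_even_even : hermitianMul h (a, 0) (b, 0) = (a * b - b * a, 0) := by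
  simp [hermitianMul]

lemma hermitianMul_even_odd : hermitianMul h (a, 0) (0, v) = (0, -(2 • a • v)) := by
  simp [hermitianMul]

lemma hermitianMul_odd_even : hermitianMul h (0, u) (b, 0) = (0, 2 • b • u) := by
  simp [hermitianMul]

lemma hermitianMul_odd_odd : hermitianMul h (0, u) (0, v) = (h u v - h v u, 0) := by
  simp [hermitianMul]

lemma hermitianMul_self (X : A × W) : hermitianMul h X X = 0 := by
  simp [hermitianMul]

lemma hermitianMul_skew (X Y : A × W) : hermitianMul h X Y = -hermitianMul h Y X := by
  simp only [hermitianMul, Prod.neg_mk, Prod.mk.injEq, ← smul_neg, neg_sub, and_true]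
  abel

lemma hermitianMul_add_left (X Y Z : A × W) :
    hermitianMul h X Z + hermitianMul h Y Z = hermitianMul h (X + Y) Z := by
  simp only [hermitianMul, Prod.mk_add_mk, Prod.mk.injEq, Prod.fst_add, Prod.snd_add, add_mul,
    mul_add, map_add, AddMonoidHom.add_apply, smul_add, add_smul, smul_sub]
  constructor <;> abel

lemma malcevDefect_even_even_even_even (a b c d : A) :
    malcevDefect (hermitianMul h) (a, 0) (b, 0) (c, 0) (d, 0) = 0 := by
  simp only [malcevDefect, hermitianMul_even_even, Prod.mk_add_mk, Prod.mk_sub_mk, add_zero,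
    sub_self, Prod.mk_eq_zero, and_true]
  noncomm_ring

end

namespace IsCyclicHermitian

variable {A W : Type*} [Ring A] [StarRing A] [AddCommGroup W] [Module A W] {h : W →+ W →+ A}
  (hh : IsCyclicHermitian h) {a b c : A}
include hh

lemma smul_right (a : A) (u v : W) : h u (a • v) = h u v * star a := by
  rw [← hh.star_apply, hh.smul_left, star_mul, hh.star_apply]

lemma smul_right_of_mem_skewAdjoint (ha : a ∈ skewAdjoint A) (u v : W) :
    h u (a • v) = -(h u v * a) := by
  rw [hh.smul_right, skewAdjoint.mem_iff.mp ha, mul_neg]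

lemma sub_mem_skewAdjoint (u v : W) : h u v - h v u ∈ skewAdjoint A := by
  rw [skewAdjoint.mem_iff, star_sub, hh.star_apply, hh.star_apply, neg_sub]

lemma commute_add_apply (u v : W) (a : A) : Commute (h u v + h v u) a := by
  simpa only [hh.star_apply] using hh.add_star_commute (h u v) a

lemma commute_anticommutator (ha : a ∈ skewAdjoint A) (hb : b ∈ skewAdjoint A) (c : A) :
    Commute (a * b + b * a) c := by
  simpa only [star_mul, skewAdjoint.mem_iff.mp ha, skewAdjoint.mem_iff.mp hb, neg_mul_neg]
    using hh.add_star_commute (a * b) c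

lemma mul_add_mul (u v w t : W) :
    h u v * h w t + h u w * h v t = (h v w + h w v) * h u t := by
  simpa only [map_add, AddMonoidHom.add_apply, hh.smul_left] using
    congrArg (h · t) (hh.cyclic u v w)

lemma malcevDefect_odd_even_even_even (ha : a ∈ skewAdjoint A) (hb : b ∈ skewAdjoint A)
    (c : A) (u : W) : malcevDefect (hermitianMul h) (0, u) (a, 0) (b, 0) (c, 0) = 0 := by
  have central := congrArg (· • u) (hh.commute_anticommutator ha hb c).eq
  simp only [malcevDefect, hermitianMul_even_even, hermitianMul_even_odd, hermitianMul_odd_even,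
    Prod.mk_add_mk, Prod.mk_sub_mk, add_zero, sub_self, Prod.mk_eq_zero, true_and]
  simp only [two_nsmul, smul_add, smul_neg, add_smul, sub_smul, smul_sub, mul_smul] at central ⊢
  linear_combination (norm := abel) -(6 : ℤ) • central

lemma malcevDefect_odd_odd_even_even (ha : a ∈ skewAdjoint A) (hb : b ∈ skewAdjoint A)
    (u v : W) : malcevDefect (hermitianMul h) (0, u) (0, v) (a, 0) (b, 0) = 0 := by
  have central := hh.commute_add_apply u v
  simp only [malcevDefect, hermitianMul_even_even, hermitianMul_even_odd, hermitianMul_odd_even,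
    hermitianMul_odd_odd, Prod.mk_add_mk, Prod.mk_sub_mk, add_zero, sub_self, Prod.mk_eq_zero,
    and_true]
  simp only [two_nsmul, map_add, map_neg, AddMonoidHom.add_apply, AddMonoidHom.neg_apply, smul_add,
    sub_smul, mul_smul, map_sub, AddMonoidHom.sub_apply, hh.smul_left,
    hh.smul_right_of_mem_skewAdjoint ha, hh.smul_right_of_mem_skewAdjoint hb]
  linear_combination (norm := noncomm_ring) -3 * (central a).eq * b - 3 * b * (central a).eq

lemma malcevDefect_odd_even_odd_even (ha : a ∈ skewAdjoint A) (hb : b ∈ skewAdjoint A)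
    (u v : W) : malcevDefect (hermitianMul h) (0, u) (a, 0) (0, v) (b, 0) = 0 := by
  have central := hh.commute_anticommutator ha hb
  simp only [malcevDefect, hermitianMul_even_even, hermitianMul_even_odd, hermitianMul_odd_even,
    hermitianMul_odd_odd, Prod.mk_add_mk, Prod.mk_sub_mk, add_zero, sub_self, Prod.mk_eq_zero,
    and_true]
  simp only [two_nsmul, map_add, map_neg, AddMonoidHom.add_apply, AddMonoidHom.neg_apply, smul_add,
    smul_neg, hh.smul_left, hh.smul_right_of_mem_skewAdjoint ha,
    hh.smul_right_of_mem_skewAdjoint hb]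
  linear_combination (norm := noncomm_ring) -3 * (central (h v u)).eq - 3 * (central (h u v)).eq

lemma malcevDefect_odd_odd_odd_even (ha : a ∈ skewAdjoint A) (u v w : W) :
    malcevDefect (hermitianMul h) (0, u) (0, v) (0, w) (a, 0) = 0 := by
  have central := congrArg (· • u) (hh.commute_add_apply v w a).eq
  have cyclic_v := hh.cyclic v u (a • w)
  have cyclic_w := hh.cyclic w u (a • v)
  have cyclic_u := hh.cyclic u v (a • w)
  simp only [malcevDefect, hermitianMul_even_even, hermitianMul_even_odd, hermitianMul_odd_even,
    hermitianMul_odd_odd, Prod.mk_add_mk, Prod.mk_sub_mk, add_zero, sub_self, Prod.mk_eq_zero,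
    true_and]
  simp only [two_nsmul, map_add, map_neg, AddMonoidHom.add_apply, AddMonoidHom.neg_apply, smul_add,
    smul_neg, mul_smul, add_smul, sub_smul, neg_smul, smul_sub, hh.smul_left,
    hh.smul_right_of_mem_skewAdjoint ha] at central cyclic_v cyclic_w cyclic_u ⊢
  linear_combination (norm := abel)
    (4 : ℤ) • cyclic_v - (4 : ℤ) • cyclic_w + (4 : ℤ) • cyclic_u - (2 : ℤ) • central

lemma malcevDefect_odd_odd_odd_odd (u v w t : W) :
    malcevDefect (hermitianMul h) (0, u) (0, v) (0, w) (0, t) = 0 := by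
  have central u v w t := (hh.commute_add_apply u v (h w t)).eq
  simp only [malcevDefect, hermitianMul_even_even, hermitianMul_even_odd, hermitianMul_odd_odd,
    Prod.mk_add_mk, Prod.mk_sub_mk, add_zero, sub_self, Prod.mk_eq_zero, and_true]
  simp only [two_nsmul, map_neg, map_add, AddMonoidHom.neg_apply, AddMonoidHom.add_apply,
    hh.smul_left, hh.smul_right_of_mem_skewAdjoint (hh.sub_mem_skewAdjoint _ _)]
  -- The coefficients solve a linear system in the products `h p q * h r s`.
  linear_combination (norm := noncomm_ring)
    2 * (hh.mul_add_mul t v w u - hh.mul_add_mul v t w u - hh.mul_add_mul w t u v +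
      hh.mul_add_mul w u v t) +
    2 * central v w t u - central u w v t + central u w t v - 2 * central t w v u

theorem malcevDefect_eq_zero {X Y Z T : A × W} (hX : X.1 ∈ skewAdjoint A)
    (hY : Y.1 ∈ skewAdjoint A) (hZ : Z.1 ∈ skewAdjoint A) (hT : T.1 ∈ skewAdjoint A) :
    malcevDefect (hermitianMul h) X Y Z T = 0 := by
  have split {X : A × W} (hX : X.1 ∈ skewAdjoint A) :
      X ∈ (fun a ↦ (a, (0 : W))) '' (skewAdjoint A : Set A) + Set.range (Prod.mk (0 : A)) :=
    ⟨_, ⟨_, hX, rfl⟩, _, ⟨X.2, rfl⟩, X.fst_add_snd⟩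
  refine malcevDefect_eq_zero_of_mem_add (hermitianMul_skew h) (hermitianMul_add_left h) ?_ ?_ ?_
    ?_ ?_ ?_ (split hX) (split hY) (split hZ) (split hT)
  · rintro - ⟨a, -, rfl⟩ - ⟨b, -, rfl⟩ - ⟨c, -, rfl⟩ - ⟨d, -, rfl⟩
    exact malcevDefect_even_even_even_even h a b c d
  · rintro - ⟨u, rfl⟩ - ⟨a, ha, rfl⟩ - ⟨b, hb, rfl⟩ - ⟨c, -, rfl⟩
    exact hh.malcevDefect_odd_even_even_even ha hb c u
  · rintro - ⟨u, rfl⟩ - ⟨v, rfl⟩ - ⟨a, ha, rfl⟩ - ⟨b, hb, rfl⟩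
    exact hh.malcevDefect_odd_odd_even_even ha hb u v
  · rintro - ⟨u, rfl⟩ - ⟨a, ha, rfl⟩ - ⟨v, rfl⟩ - ⟨b, hb, rfl⟩
    exact hh.malcevDefect_odd_even_odd_even ha hb u v
  · rintro - ⟨u, rfl⟩ - ⟨v, rfl⟩ - ⟨w, rfl⟩ - ⟨a, ha, rfl⟩
    exact hh.malcevDefect_odd_odd_odd_even ha u v w
  · rintro - ⟨u, rfl⟩ - ⟨v, rfl⟩ - ⟨w, rfl⟩ - ⟨t, rfl⟩
    exact hh.malcevDefect_odd_odd_odd_odd u v w t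

end IsCyclicHermitian

section

open scoped Matrix.Module

/-- The symplectic involution as a star operation on `M₂(B)`. It competes with the conjugate
transpose that Mathlib puts on matrices over a star ring, so it is only a local instance. -/
abbrev symplStarRing (B : Type*) [CommRing B] :
    StarRing (Matrix (Fin 2) (Fin 2) B) where
  star := sympl
  star_involutive a := by
    ext i j
    fin_cases i <;> fin_cases j <;> simp [sympl]
  star_mul a b := by
    ext i j
    fin_cases i <;> fin_cases j <;> simp [sympl, Matrix.mul_apply, Fin.sum_univ_two] <;> ring
  star_add a b := by
    ext i j
    fin_cases i <;> fin_cases j <;> simp [sympl] <;> ring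

attribute [local instance] symplStarRing

lemma add_sympl_eq_trace_smul_one (a : Matrix (Fin 2) (Fin 2) B) :
    a + sympl a = a.trace • (1 : Matrix (Fin 2) (Fin 2) B) := by
  ext i j
  fin_cases i <;> fin_cases j <;> simp [sympl, Matrix.trace_fin_two, add_comm]

lemma mem_skewAdjoint_of_mem_sl2T {a : Matrix (Fin 2) (Fin 2) B} (ha : a ∈ sl2T B) :
    a ∈ skewAdjoint (Matrix (Fin 2) (Fin 2) B) := by
  have trace_zero : a.trace = 0 := ha
  rw [skewAdjoint.mem_iff, eq_neg_iff_add_eq_zero, add_comm]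
  exact (add_sympl_eq_trace_smul_one a).trans (by rw [trace_zero, zero_smul])

/-- The matrix-valued form `(u, v) ↦ (β(uᵢ, (Jv)ⱼ))ᵢⱼ` on column vectors, where
`Jv = (v₁, -v₀)`. -/
def symplForm (β : V →ₗ[B] V →ₗ[B] B) :
    (Fin 2 → V) →+ (Fin 2 → V) →+ Matrix (Fin 2) (Fin 2) B :=
  .mk' (fun u ↦ .mk' (fun v ↦ .of fun i j ↦ β (u i) (![v 1, -v 0] j)) fun v v' ↦ by
      ext i j; fin_cases j <;> simp [add_comm])
    fun u u' ↦ AddMonoidHom.ext fun v ↦ by ext i j; simp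

lemma symplForm_apply (β : V →ₗ[B] V →ₗ[B] B) (u v : Fin 2 → V) (i j : Fin 2) :
    symplForm β u v i j = β (u i) (![v 1, -v 0] j) := rfl

lemma isCyclicHermitian_symplForm {β : V →ₗ[B] V →ₗ[B] B} (skew : ∀ u v, β u v = -β v u)
    (cyc : ∀ u v w, β u v • w + β v w • u + β w u • v = 0) :
    IsCyclicHermitian (symplForm β) where
  add_star_commute a b := by
    rw [show a + star a = a + sympl a from rfl, add_sympl_eq_trace_smul_one]
    exact (Commute.one_left b).smul_left _
  smul_left a u v := by
    ext i j
    simp [symplForm_apply, Matrix.mul_apply, Matrix.Module.smul_apply]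
  star_apply u v := by
    ext i j
    fin_cases i <;> fin_cases j <;>
      simp [star, sympl, symplForm_apply, skew (v _) (u _)]
  cyclic u v w := by
    ext i
    have cyclic₀ := cyc (u i) (v 0) (w 1)
    have cyclic₁ := cyc (u i) (v 1) (w 0)
    fin_cases i <;>
      simp only [Fin.zero_eta, Fin.mk_one, symplForm_apply, Matrix.Module.smul_apply,
        Fin.sum_univ_two, Pi.add_apply, Matrix.add_apply, Matrix.cons_val_zero,
        Matrix.cons_val_one, map_neg] at cyclic₀ cyclic₁ ⊢ <;>
      simp only [skew (w _)] at cyclic₀ cyclic₁ ⊢ <;>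
      linear_combination (norm := module) cyclic₁ - cyclic₀

lemma symplForm_sub_symplForm_swap {c : B} (half : 2 * c = 1) {φ : V →ₗ[B] V →ₗ[B] B}
    (skew : ∀ u v, φ u v = -φ v u) (x y x' y' : V) :
    symplForm (c ^ 2 • φ) ![x, y] ![x', y'] - symplForm (c ^ 2 • φ) ![x', y'] ![x, y] =
      c • !![c * (φ x y' + φ y x'), -φ x x'; φ y y', -(c * (φ x y' + φ y x'))] := by
  have double (b : B) : c ^ 2 * b + c ^ 2 * b = c * b := by linear_combination c * b * half
  ext i j
  fin_cases i <;> fin_cases j <;>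
    simp [symplForm_apply, skew x' _, skew y' _, ← double (φ _ _)] <;> ring

lemma cons_actV {A : Matrix (Fin 2) (Fin 2) B} (hA : A ∈ sl2T B) (p : V × V) :
    ![(actV A p).1, (actV A p).2] = 2 • A • ![p.1, p.2] := by
  have trace_zero : A 0 0 + A 1 1 = 0 := A.trace_fin_two.symm.trans hA
  ext i
  fin_cases i <;>
    simp [actV, Matrix.Module.smul_apply, eq_neg_of_add_eq_zero_right trace_zero, two_smul,
      sub_eq_add_neg]

/-- The embedding of `sl₂(B) ⊕ V²` into `M₂(B) × (Fin 2 → V)`, which reads `V²` as column vectors so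
that matrices act on it. -/
def toMatrixProd : ↥(sl2T B) × V × V →+ Matrix (Fin 2) (Fin 2) B × (Fin 2 → V) where
  toFun X := (X.1, ![X.2.1, X.2.2])
  map_zero' := by simp
  map_add' X Y := by simp

omit [Module B V] in
lemma toMatrixProd_injective :
    Function.Injective (toMatrixProd : ↥(sl2T B) × V × V →+ _ × (Fin 2 → V)) := by
  rintro ⟨A, x, y⟩ ⟨A', x', y'⟩ h
  simpa [toMatrixProd] using h

omit [Module K V] [IsScalarTower K B V] in
lemma toMatrixProd_conMul (h2 : (2 : K) ≠ 0) {φ : V →ₗ[B] V →ₗ[B] B}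
    (skew : ∀ u v, φ u v = -φ v u) (X Y : ↥(sl2T B) × V × V) :
    toMatrixProd (conMul K B V (φ · ·) X Y) =
      hermitianMul (symplForm (algebraMap K B 2⁻¹ ^ 2 • φ)) (toMatrixProd X) (toMatrixProd Y) := by
  obtain ⟨⟨A, hA⟩, x, y⟩ := X
  obtain ⟨⟨A', hA'⟩, x', y'⟩ := Y
  have half : 2 * algebraMap K B 2⁻¹ = 1 := by
    rw [← map_ofNat (algebraMap K B) 2, ← map_mul, mul_inv_cancel₀ h2, map_one]
  refine Prod.ext (congrArg (A * A' - A' * A + ·) ?_) ?_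
  · exact (symplForm_sub_symplForm_swap half skew x y x' y').symm
  · calc ![_, _] = ![(actV A' (x, y)).1, (actV A' (x, y)).2] -
          ![(actV A (x', y')).1, (actV A (x', y')).2] := by simp [conMul]
      _ = 2 • (A' • ![x, y] - A • ![x', y']) := by rw [cons_actV hA', cons_actV hA, smul_sub]

omit [Module K V] [IsScalarTower K B V] in
lemma conMul_inl {bk : V → V → B} (hbk : bk 0 0 = 0) (A A' : ↥(sl2T B)) :
    conMul K B V bk (A, (0 : V × V)) (A', (0 : V × V)) =
      (⟨(A : Matrix (Fin 2) (Fin 2) B) * (A' : Matrix (Fin 2) (Fin 2) B) -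
          (A' : Matrix (Fin 2) (Fin 2) B) * (A : Matrix (Fin 2) (Fin 2) B),
        comm_mem_sl2T _ _⟩, (0 : V × V)) := by
  refine Prod.ext (Subtype.ext ?_) (by simp [conMul, actV])
  ext i j
  fin_cases i <;> fin_cases j <;> simp [conMul, conMulMat, hbk]

lemma exists_linearMap_of_bilinear (bk : V → V → B) (hlin : ∀ (b : B) (u u' v : V),
      bk (b • u + u') v = b * bk u v + bk u' v ∧ bk v (b • u + u') = b * bk v u + bk v u') :
    ∃ φ : V →ₗ[B] V →ₗ[B] B, (φ · ·) = bk := by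
  have hadd (u u' v : V) : bk (u + u') v = bk u v + bk u' v := by simpa using (hlin 1 u u' v).1
  have hadd' (u v v' : V) : bk u (v + v') = bk u v + bk u v' := by simpa using (hlin 1 v v' u).2
  have hzero (v : V) : bk 0 v = 0 := by simpa using hadd 0 0 v
  have hzero' (v : V) : bk v 0 = 0 := by simpa using hadd' v 0 0
  exact ⟨LinearMap.mk₂ B bk hadd (fun b u v ↦ by simpa [hzero] using (hlin b u 0 v).1)
    hadd' (fun b u v ↦ by simpa [hzero'] using (hlin b v 0 u).2), rfl⟩

omit [Module K V] [IsScalarTower K B V] in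
theorem stmt9_general
    (h2 : (2 : K) ≠ 0)
    (bk : V → V → B)
    (hskew : ∀ u v : V, bk u v = -(bk v u))
    (hlin : ∀ (b : B) (u u' v : V),
      bk (b • u + u') v = b * bk u v + bk u' v ∧ bk v (b • u + u') = b * bk v u + bk v u')
    (hcyc : ∀ u v w : V, bk u v • w + bk v w • u + bk w u • v = 0) :
    (∀ X : ↥(sl2T B) × V × V, conMul K B V bk X X = 0) ∧
    (∀ X Y : ↥(sl2T B) × V × V, conMul K B V bk X Y = -(conMul K B V bk Y X)) ∧
    (∀ X Y Z : ↥(sl2T B) × V × V, conMul K B V bk X Z + conMul K B V bk Y Z =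
      conMul K B V bk (X + Y) Z) ∧
    (∀ X Y Z W : ↥(sl2T B) × V × V,
      conMul K B V bk (conMul K B V bk X Z) (conMul K B V bk Y W) =
        conMul K B V bk (conMul K B V bk (conMul K B V bk X Y) Z) W +
        conMul K B V bk (conMul K B V bk (conMul K B V bk Y Z) W) X +
        conMul K B V bk (conMul K B V bk (conMul K B V bk Z W) X) Y +
        conMul K B V bk (conMul K B V bk (conMul K B V bk W X) Y) Z) ∧
    (∀ A A' : ↥(sl2T B), conMul K B V bk (A, (0 : V × V)) (A', (0 : V × V)) =
      (⟨(A : Matrix (Fin 2) (Fin 2) B) * (A' : Matrix (Fin 2) (Fin 2) B) -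
          (A' : Matrix (Fin 2) (Fin 2) B) * (A : Matrix (Fin 2) (Fin 2) B),
        comm_mem_sl2T _ _⟩, (0 : V × V))) := by
  obtain ⟨φ, rfl⟩ := exists_linearMap_of_bilinear bk hlin
  have hherm : IsCyclicHermitian (symplForm (algebraMap K B 2⁻¹ ^ 2 • φ)) :=
    isCyclicHermitian_symplForm (fun u v ↦ by simp [hskew u v]) fun u v w ↦ by
      simp only [LinearMap.smul_apply, smul_assoc, ← smul_add, hcyc, smul_zero]
  have hmul := toMatrixProd_conMul h2 hskew
  have mem_skew (X : ↥(sl2T B) × V × V) : (toMatrixProd X).1 ∈ skewAdjoint _ :=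
    mem_skewAdjoint_of_mem_sl2T X.1.2
  refine ⟨fun X ↦ toMatrixProd_injective ?_, fun X Y ↦ toMatrixProd_injective ?_,
    fun X Y Z ↦ toMatrixProd_injective ?_, fun X Y Z W ↦ toMatrixProd_injective ?_,
    conMul_inl (by simp)⟩
  · rw [hmul, hermitianMul_self, map_zero]
  · rw [map_neg, hmul, hmul, hermitianMul_skew]
  · simp only [map_add, hmul, hermitianMul_add_left]
  · simp only [map_add, hmul]
    exact (sub_eq_zero.mp <| hherm.malcevDefect_eq_zero (mem_skew X) (mem_skew Y) (mem_skew Z)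
      (mem_skew W)).symm

end

/-- For a commutative associative unital `F`-algebra `B`, a `B`-module
`V` and a skew-symmetric `B`-bilinear map `⟨·,·⟩ : V × V → B` with
`w⟨u,v⟩ + u⟨v,w⟩ + v⟨w,u⟩ = 0`, the algebra `sl₂(B) ⊕ V²` of the construction is a
Malcev algebra over `F` containing `sl₂(B)` as a subalgebra. -/
theorem stmt9
    (h2 : (2 : K) ≠ 0) (h3 : (3 : K) ≠ 0)
    (bk : V → V → B)
    (hskew : ∀ u v : V, bk u v = -(bk v u))
    (hlin : ∀ (b : B) (u u' v : V),
      bk (b • u + u') v = b * bk u v + bk u' v ∧ bk v (b • u + u') = b * bk v u + bk v u')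
    (hcyc : ∀ u v w : V, bk u v • w + bk v w • u + bk w u • v = 0) :
    (∀ X : ↥(sl2T B) × V × V, conMul K B V bk X X = 0) ∧
    (∀ X Y : ↥(sl2T B) × V × V, conMul K B V bk X Y = -(conMul K B V bk Y X)) ∧
    (∀ X Y Z W : ↥(sl2T B) × V × V, conMul K B V bk X Z + conMul K B V bk Y Z =
      conMul K B V bk (X + Y) Z) ∧
    (∀ X Y Z W : ↥(sl2T B) × V × V,
      conMul K B V bk (conMul K B V bk X Z) (conMul K B V bk Y W) =
        conMul K B V bk (conMul K B V bk (conMul K B V bk X Y) Z) W +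
        conMul K B V bk (conMul K B V bk (conMul K B V bk Y Z) W) X +
        conMul K B V bk (conMul K B V bk (conMul K B V bk Z W) X) Y +
        conMul K B V bk (conMul K B V bk (conMul K B V bk W X) Y) Z) ∧
    (∀ A A' : ↥(sl2T B), conMul K B V bk (A, (0 : V × V)) (A', (0 : V × V)) =
      (⟨(A : Matrix (Fin 2) (Fin 2) B) * (A' : Matrix (Fin 2) (Fin 2) B) -
          (A' : Matrix (Fin 2) (Fin 2) B) * (A : Matrix (Fin 2) (Fin 2) B),
        comm_mem_sl2T _ _⟩, (0 : V × V))) := by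
  obtain ⟨self, skew, add_left, malcev, inl⟩ := stmt9_general h2 bk hskew hlin hcyc
  exact ⟨self, skew, fun X Y Z _ ↦ add_left X Y Z, malcev, inl⟩

end
end
end

section
/- Let B be a unital commutative associative algebra over F, let V = B², and let ⟨·,·⟩ : V × V → B be any skew-symmetric B-bilinear map. Then the algebra M = sl2(B) ⊕ V² of the construction is isomorphic as an F-algebra to M̃(sl2(B), α), where α = −⟨(1/2, 0), (0, 1/2)⟩. Conversely, for any unital commutative associative F-algebra U and any α ∈ U, the algebra M̃(sl2(U), α) is isomorphic to the algebra sl2(U) ⊕ (U²)² of the construction with ⟨(a,b),(c,d)⟩ = −4α(ad − bc). -/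
/-!
Read `(u, v) ∈ V²` as the matrix `P` with rows `u` and `v`. For `A` of trace zero `A* = -A`, so on
`V²` as well as on `vM₂` left multiplication by `A` is `P ↦ -2AP`. A skew form on `B²` is determined
by its value on the standard basis: it is `-4α` times the determinant, with `α` as in the statement.
Since the entries of `PQ*` are, up to sign, the determinants of a row of `P` and a row of `Q`, the
products of two elements of `V²` agree as well.
-/

section
variable (K : Type*) [Field K] (B : Type*) [CommRing B] [Algebra K B]

variable (V : Type*) [AddCommGroup V] [Module B V]

section
variable {K : Type*} [Field K] {B : Type*} [CommRing B] [Algebra K B]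

section Matrices

lemma add_sympl (A : Matrix (Fin 2) (Fin 2) B) : A + sympl A = A.trace • 1 := by
  ext i j
  fin_cases i <;> fin_cases j <;> simp [sympl, Matrix.trace_fin_two, add_comm]

lemma sympl_fin_two_of (a b c d : B) : sympl !![a, b; c, d] = !![d, -b; -c, a] := rfl

lemma sympl_eq_neg {A : Matrix (Fin 2) (Fin 2) B} (hA : A ∈ sl2T B) : sympl A = -A := by
  have htrace : A.trace = 0 := by simpa [sl2T] using hA
  exact eq_neg_of_add_eq_zero_right (by rw [add_sympl, htrace, zero_smul])

/-- The matrix with rows `p.1` and `p.2`: this is how an element of `V²`, for `V = M²`, is read as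
an element of the summand `vM₂` of `M̃`. -/
def pairRows {M : Type*} (p : (M × M) × M × M) : Matrix (Fin 2) (Fin 2) M :=
  !![p.1.1, p.1.2; p.2.1, p.2.2]

/-- The standard skew form on `B²`: the determinant of the matrix with rows `u` and `v`. -/
def rowDet (u v : B × B) : B := u.1 * v.2 - u.2 * v.1

lemma rowDet_swap (u v : B × B) : rowDet v u = -rowDet u v := by
  simp only [rowDet]
  ring

lemma pairRows_sub {M : Type*} [AddGroup M] (p q : (M × M) × M × M) :
    pairRows (p - q) = pairRows p - pairRows q := by
  simp [pairRows]

lemma pairRows_actV {A : Matrix (Fin 2) (Fin 2) B} (hA : A ∈ sl2T B) (p : (B × B) × B × B) :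
    pairRows (actV A p) = (2 : B) • (A * pairRows p) := by
  have hdiag : A 1 1 = -A 0 0 := congrFun₂ (sympl_eq_neg hA) 0 0
  rw [Matrix.eta_fin_two A, hdiag]
  simp [pairRows, actV, mul_add, sub_eq_add_neg]

lemma pairRows_mul_sympl_pairRows (p q : (B × B) × B × B) :
    pairRows p * sympl (pairRows q) =
      !![rowDet p.1 q.2, -rowDet p.1 q.1; rowDet p.2 q.2, -rowDet p.2 q.1] := by
  simp only [pairRows, sympl_fin_two_of, Matrix.mul_fin_two, rowDet]
  ring_nf

lemma pairRows_mul_sympl_sub (p q : (B × B) × B × B) :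
    pairRows q * sympl (pairRows p) - pairRows p * sympl (pairRows q) =
      !![-(rowDet p.1 q.2 + rowDet p.2 q.1), 2 * rowDet p.1 q.1;
         -(2 * rowDet p.2 q.2), rowDet p.1 q.2 + rowDet p.2 q.1] := by
  rw [pairRows_mul_sympl_pairRows, pairRows_mul_sympl_pairRows, rowDet_swap p.1 q.1,
    rowDet_swap p.2 q.1, rowDet_swap p.1 q.2, rowDet_swap p.2 q.2]
  simp [two_mul, sub_eq_add_neg, add_comm]

lemma pairRows_actV_sub_actV (α : B) (X Y : ↥(sl2T B) × (B × B) × (B × B)) :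
    pairRows (actV (Y.1 : Matrix (Fin 2) (Fin 2) B) X.2 - actV X.1.1 Y.2) =
      (mtMul α (X.1, pairRows X.2) (Y.1, pairRows Y.2)).2 := by
  simp only [mtMul, pairRows_sub, pairRows_actV, sympl_eq_neg, SetLike.coe_mem, neg_mul,
    two_smul]
  abel

end Matrices

section BilinearForms

variable {R M : Type*} [CommRing R] [AddCommGroup M] [Module R M]

/-- A function that is linear in each argument, bundled as a bilinear form. Linearity is asked for
in the one-equation form in which it is given for the bracket of the construction. -/
def bilinFormOfSMulAdd (f : M → M → R)
    (hf : ∀ (b : R) (u u' v : M),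
      f (b • u + u') v = b * f u v + f u' v ∧ f v (b • u + u') = b * f v u + f v u') :
    LinearMap.BilinForm R M :=
  have zero_left (v : M) : f 0 v = 0 := by simpa using (hf 1 0 0 v).1
  have zero_right (v : M) : f v 0 = 0 := by simpa using (hf 1 0 0 v).2
  LinearMap.mk₂ R f
    (fun u u' v => by simpa using (hf 1 u u' v).1)
    (fun b u v => by simpa [zero_left] using (hf b u 0 v).1)
    (fun v u u' => by simpa using (hf 1 u u' v).2)
    (fun b v u => by simpa [zero_right] using (hf b u 0 v).2)

lemma isAlt_of_apply_eq_neg (h2 : IsUnit (2 : R)) {ω : LinearMap.BilinForm R M}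
    (hω : ∀ u v, ω u v = -ω v u) : ω.IsAlt := fun u =>
  h2.mul_right_eq_zero.mp (by rw [two_mul, add_eq_zero_iff_eq_neg, ← hω])

lemma apply_eq_mul_rowDet_of_isAlt {ω : LinearMap.BilinForm R (R × R)} (hω : ω.IsAlt)
    (u v : R × R) : ω u v = ω (1, 0) (0, 1) * rowDet u v := by
  have expand (w : R × R) : w = w.1 • (1, 0) + w.2 • (0, 1) := by simp
  have hswap : ω (0, 1) (1, 0) = -ω (1, 0) (0, 1) := (hω.neg_eq _ _).symm
  conv_lhs => rw [expand u, expand v]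
  simp only [map_add, map_smul, LinearMap.add_apply, LinearMap.smul_apply, smul_eq_mul,
    hω.self_eq_zero, hswap, rowDet]
  ring

lemma apply_eq_mul_rowDet_of_skew {h : R} (hh : 2 * h = 1)
    {f : R × R → R × R → R} (hskew : ∀ u v, f u v = -f v u)
    (hf : ∀ (b : R) (u u' v : R × R),
      f (b • u + u') v = b * f u v + f u' v ∧ f v (b • u + u') = b * f v u + f v u')
    (u v : R × R) : f u v = 4 * f (h, 0) (0, h) * rowDet u v := by
  have hdet := apply_eq_mul_rowDet_of_isAlt
    (isAlt_of_apply_eq_neg (ω := bilinFormOfSMulAdd f hf) (.of_mul_eq_one h hh) hskew)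
  have hhalf : f (h, 0) (0, h) = f (1, 0) (0, 1) * (h * h) :=
    (hdet (h, 0) (0, h)).trans (by simp [rowDet, bilinFormOfSMulAdd])
  have huv : f u v = f (1, 0) (0, 1) * rowDet u v := hdet u v
  rw [huv, hhalf]
  linear_combination (-f (1, 0) (0, 1) * rowDet u v * (2 * h + 1)) * hh

end BilinearForms

section Isomorphism

/-- `pairRows` as a linear equivalence. -/
def pairRowsEquiv (R M : Type*) [Semiring R] [AddCommMonoid M] [Module R M] :
    ((M × M) × M × M) ≃ₗ[R] Matrix (Fin 2) (Fin 2) M :=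
  (LinearEquiv.finTwoArrow R M).symm.prodCongr (LinearEquiv.finTwoArrow R M).symm ≪≫ₗ
    (LinearEquiv.finTwoArrow R (Fin 2 → M)).symm ≪≫ₗ Matrix.ofLinearEquiv R

/-- The isomorphism `sl₂(B) ⊕ (B²)² ≃ sl₂(B) ⊕ vM₂(B)`: the identity on `sl₂(B)` and `pairRows`
on the other summand. -/
def conEquiv (R B : Type*) [CommSemiring R] [CommRing B] [Algebra R B] :
    (↥(sl2T B) × (B × B) × (B × B)) ≃ₗ[R] (↥(sl2T B) × Matrix (Fin 2) (Fin 2) B) :=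
  (LinearEquiv.refl R ↥(sl2T B)).prodCongr (pairRowsEquiv R B)

lemma conEquiv_apply {R : Type*} [CommSemiring R] [Algebra R B]
    (X : ↥(sl2T B) × (B × B) × (B × B)) : conEquiv R B X = (X.1, pairRows X.2) :=
  rfl

lemma two_mul_algebraMap_inv_two (h2 : (2 : K) ≠ 0) : (2 : B) * algebraMap K B 2⁻¹ = 1 := by
  rw [← map_ofNat (algebraMap K B) 2, ← map_mul, mul_inv_cancel₀ h2, map_one]

lemma conMulMat_eq_mtMulMat (h2 : (2 : K) ≠ 0) (α : B)
    (X Y : ↥(sl2T B) × (B × B) × (B × B)) :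
    conMulMat K B (B × B) (fun u v => -(4 * α * rowDet u v)) X Y =
      mtMulMat α (X.1, pairRows X.2) (Y.1, pairRows Y.2) := by
  have hh := two_mul_algebraMap_inv_two (B := B) h2
  simp only [conMulMat, mtMulMat, pairRows_mul_sympl_sub]
  set h := algebraMap K B 2⁻¹
  have diagonal (a d : B) : h * (h * (4 * α * a + 4 * α * d)) = α * (a + d) := by
    linear_combination α * (a + d) * (2 * h + 1) * hh
  have offDiagonal (b : B) : h * (4 * α * b) = α * (2 * b) := by
    linear_combination 2 * α * b * hh
  simp only [Matrix.smul_of, Matrix.smul_cons, Matrix.smul_empty, smul_eq_mul, ← neg_add, mul_neg,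
    neg_neg, diagonal, offDiagonal]

theorem conEquiv_conMul (h2 : (2 : K) ≠ 0) (α : B) (X Y : ↥(sl2T B) × (B × B) × (B × B)) :
    conEquiv K B (conMul K B (B × B) (fun u v => -(4 * α * rowDet u v)) X Y) =
      mtMul α (conEquiv K B X) (conEquiv K B Y) := by
  simp only [conEquiv_apply]
  exact Prod.ext (Subtype.ext (conMulMat_eq_mtMulMat h2 α X Y)) (pairRows_actV_sub_actV α X Y)

theorem stmt12_general (h2 : (2 : K) ≠ 0) (bk : B × B → B × B → B)
    (hskew : ∀ u v : B × B, bk u v = -(bk v u))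
    (hlin : ∀ (b : B) (u u' v : B × B),
      bk (b • u + u') v = b * bk u v + bk u' v ∧ bk v (b • u + u') = b * bk v u + bk v u') :
    (∃ e : (↥(sl2T B) × (B × B) × (B × B)) ≃ₗ[K]
        (↥(sl2T B) × Matrix (Fin 2) (Fin 2) B),
      ∀ X Y, e (conMul K B (B × B) bk X Y) =
        mtMul (-(bk (algebraMap K B 2⁻¹, 0) (0, algebraMap K B 2⁻¹))) (e X) (e Y)) ∧
    (∀ α : B,
      ∃ e : (↥(sl2T B) × Matrix (Fin 2) (Fin 2) B) ≃ₗ[K]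
          (↥(sl2T B) × (B × B) × (B × B)),
        ∀ X Y, e (mtMul α X Y) =
          conMul K B (B × B)
            (fun u v => -((4 : B) * α * (u.1 * v.2 - u.2 * v.1))) (e X) (e Y)) := by
  set α₀ := -(bk (algebraMap K B 2⁻¹, 0) (0, algebraMap K B 2⁻¹)) with hα₀
  have hbk : bk = fun u v => -(4 * α₀ * rowDet u v) := by
    ext u v
    rw [apply_eq_mul_rowDet_of_skew (two_mul_algebraMap_inv_two h2) hskew hlin u v, hα₀]
    ring
  refine ⟨⟨conEquiv K B, fun X Y => ?_⟩, fun α => ⟨(conEquiv K B).symm, fun X Y => ?_⟩⟩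
  · rw [hbk]
    exact conEquiv_conMul h2 α₀ X Y
  · rw [LinearEquiv.symm_apply_eq]
    simpa [rowDet] using (conEquiv_conMul h2 α ((conEquiv K B).symm X) ((conEquiv K B).symm Y)).symm

end Isomorphism

/-- For `V = B²` and any skew-symmetric `B`-bilinear `⟨·,·⟩`, the
algebra `sl₂(B) ⊕ V²` of the construction is isomorphic (as an `F`-algebra) to
`M̃(sl₂(B), α)` with `α = −⟨(1/2, 0), (0, 1/2)⟩`; conversely, every `M̃(sl₂(U), α)` is
isomorphic to the construction `sl₂(U) ⊕ (U²)²` with `⟨(a,b),(c,d)⟩ = −4α(ad − bc)`. -/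
theorem stmt12
    (h2 : (2 : K) ≠ 0) (h3 : (3 : K) ≠ 0)
    (bk : B × B → B × B → B)
    (hskew : ∀ u v : B × B, bk u v = -(bk v u))
    (hlin : ∀ (b : B) (u u' v : B × B),
      bk (b • u + u') v = b * bk u v + bk u' v ∧ bk v (b • u + u') = b * bk v u + bk v u') :
    (∃ e : (↥(sl2T B) × (B × B) × (B × B)) ≃ₗ[K]
        (↥(sl2T B) × Matrix (Fin 2) (Fin 2) B),
      ∀ X Y, e (conMul K B (B × B) bk X Y) =
        mtMul (-(bk (algebraMap K B 2⁻¹, 0) (0, algebraMap K B 2⁻¹))) (e X) (e Y)) ∧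
    (∀ α : B,
      ∃ e : (↥(sl2T B) × Matrix (Fin 2) (Fin 2) B) ≃ₗ[K]
          (↥(sl2T B) × (B × B) × (B × B)),
        ∀ X Y, e (mtMul α X Y) =
          conMul K B (B × B)
            (fun u v => -((4 : B) * α * (u.1 * v.2 - u.2 * v.1))) (e X) (e Y)) :=
  stmt12_general h2 bk hskew hlin

end

end
end

section
/- Let M be a Malcev algebra over F lying in the variety H and containing L = sl2(F). Then: (i) Ann_M L is a subalgebra of M; (ii) (Ann_M L)·(aα) = 0 for every a ∈ L and every α in the centroid Γ(M); in particular (Ann_M L)·N_M = 0; (iii) for every m ∈ Ann_M L and every u ∈ M satisfying u(1)E = u(2), u(1)H = u(1), u(1)F = 0, u(2)E = 0, u(2)H = −u(2), u(2)F = −u(1) (where u(1) = u), one has (u(1)m)H = −2(u(1)m), (u(1)m)F = 0, (u(1)m)E = u(2)m, (u(2)m)H = 2(u(2)m), (u(2)m)F = −(u(1)m), (u(2)m)E = 0; consequently (Ann_M L)·J_M ⊆ J_M. -/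
section
variable {K : Type*} [Field K] {M : Type*} [AddCommGroup M] [Module K M]

/-
If `m` annihilates `a` and `b`, then the Malcev identity reads `(vm)(ab) = ((va)m)b − ((vb)a)m`.
Since `L = L²`, this determines the action of `L` on `vm`, and (i) and (iii) follow; for `J_M` one
finds that right multiplication by `m` commutes with `v ↦ {v,a,b}`. As `m(aα) = (ma)α = 0` for `α`
in the centroid, what is left of (ii) is that the operators `x ↦ p(x,y,z,t)` lie in the centroid.

In every Malcev algebra `p(x,y,z,t)` differs from the alternating function
`J(xy,z,t) + J(zt,x,y)` only by `J(y,z,t)x` and the cyclic sum of `((yz)x)t`, so that identities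
between Jacobians compute `p(xw,y,z,t)`. The difference `p(x,y,z,t)w − p(xw,y,z,t)` comes out as a
signed sum of three values of `h`, and hence vanishes in the variety `𝓗`.
-/

section

variable {μ : M →ₗ[K] M →ₗ[K] M} {L : Submodule K M}

/-- `J(xy,z,t) + J(zt,x,y)`, which in a Malcev algebra is alternating in its four arguments and
is the leading term of `p(x,y,z,t)`. -/
def altJac (μ : M →ₗ[K] M →ₗ[K] M) (x y z t : M) : M :=
  mjac μ (μ x y) z t + mjac μ (μ z t) x y

theorem mjac_rotate (x y z : M) : mjac μ x y z = mjac μ y z x := by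
  simp only [mjac]
  abel

theorem mjac_neg_left (x y z : M) : mjac μ (-x) y z = -mjac μ x y z := by
  simp only [mjac, map_neg, LinearMap.neg_apply, neg_add]

theorem mbr_neg_left (x y z : M) : mbr μ (-x) y z = -mbr μ x y z := by
  simp only [mbr, map_neg, LinearMap.neg_apply]
  module

theorem span_subset_centroid {S : Set (Module.End K M)} (hS : S ⊆ centroid μ) :
    (Submodule.span K S : Set (Module.End K M)) ⊆ centroid μ := by
  intro α hα
  induction hα using Submodule.span_induction with
  | mem α hα => exact hS hα
  | zero => exact fun x y => by simp only [LinearMap.zero_apply, map_zero, and_self]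
  | add α β _ _ hα hβ =>
    exact fun x y => by simp [← (hα x y).1, ← (hβ x y).1, ← (hα x y).2, ← (hβ x y).2]
  | smul c α _ hα => exact fun x y => by simp [← (hα x y).1, ← (hα x y).2]

theorem mul_apply_eq_zero_of_mem_centroid {m a : M} {α : Module.End K M} (hα : α ∈ centroid μ)
    (hma : μ m a = 0) : μ m (α a) = 0 := by
  rw [← (hα m a).1, hma, map_zero]

namespace IsMalcev

theorem anticomm (hM : IsMalcev μ) (x y : M) : μ x y = -μ y x := by
  have h := hM.1 (x + y)
  simp only [map_add, LinearMap.add_apply, hM.1, zero_add, add_zero] at h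
  exact eq_neg_of_add_eq_zero_right h

theorem mjac_swap_right (hM : IsMalcev μ) (x y z : M) : mjac μ x z y = -mjac μ x y z := by
  simp only [mjac, hM.anticomm x z, hM.anticomm z y, hM.anticomm y x, map_neg,
    LinearMap.neg_apply]
  abel

theorem mjac_swap_outer (hM : IsMalcev μ) (x y z : M) : mjac μ z y x = -mjac μ x y z := by
  rw [hM.mjac_swap_right, mjac_rotate z]

theorem mbr_eq_mjac_add (hM : IsMalcev μ) (x y z : M) :
    mbr μ x y z = mjac μ x y z + (3 : K) • μ x (μ y z) := by
  simp only [mjac, mbr, hM.anticomm (μ y z) x, hM.anticomm z x, map_neg, LinearMap.neg_apply]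
  module

theorem mbr_swap_right (hM : IsMalcev μ) (x y z : M) : mbr μ x z y = -mbr μ x y z := by
  simp only [mbr, hM.anticomm z y, map_neg]
  module

theorem mjac_mul_add_mjac_mul_s14 (hM : IsMalcev μ) (x y z t : M) :
    mjac μ (μ t z) x y + mjac μ (μ x z) t y = μ (mjac μ x y z) t + μ (mjac μ t y z) x := by
  have h₁ := hM.2 x y z t
  have h₂ := hM.2 x t y z
  simp only [mjac, map_add, map_neg, LinearMap.add_apply, LinearMap.neg_apply,
    hM.anticomm y (μ _ _), hM.anticomm z x, hM.anticomm t x, hM.anticomm y t,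
    hM.anticomm z t, hM.anticomm (μ x z) (μ t y)] at h₁ h₂ ⊢
  linear_combination (norm := module) h₁ + h₂

theorem mul_mul_add_rotate (hM : IsMalcev μ) (x y z t : M) :
    μ (μ x y) (μ z t) + μ (μ x z) (μ t y) + μ (μ x t) (μ y z) =
      -μ (mjac μ y z t) x - (μ (μ (μ y z) x) t + μ (μ (μ z t) x) y + μ (μ (μ t y) x) z) := by
  have h₁ := hM.2 x y z t
  have h₂ := hM.2 x z t y
  have h₃ := hM.2 x t y z
  simp only [mjac, map_add, map_neg, LinearMap.add_apply, LinearMap.neg_apply,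
    hM.anticomm z x, hM.anticomm t x, hM.anticomm y x, hM.anticomm y t,
    hM.anticomm z y, hM.anticomm t z] at h₁ h₂ h₃ ⊢
  linear_combination (norm := module) -h₁ - h₂ - h₃

theorem mjac_mul_add_rotate (hM : IsMalcev μ) (x y z t : M) :
    mjac μ (μ z t) x y + mjac μ (μ t y) x z + mjac μ (μ y z) x t =
      -(2 : K) • μ (mjac μ y z t) x := by
  have h := hM.mul_mul_add_rotate x y z t
  simp only [mjac, map_add, map_neg, LinearMap.add_apply, LinearMap.neg_apply,
    hM.anticomm y (μ _ _), hM.anticomm z (μ _ _), hM.anticomm t (μ _ _)] at h ⊢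
  linear_combination (norm := module) h

theorem altJac_rotate (hM : IsMalcev μ) (x y z t : M) :
    altJac μ x y z t = altJac μ x z t y := by
  have h₁ := hM.mjac_mul_add_mjac_mul_s14 x y z t
  have h₂ := hM.mjac_mul_add_mjac_mul_s14 t z y x
  simp only [hM.anticomm t z, mjac_neg_left] at h₁
  simp only [hM.mjac_swap_right _ z t, hM.mjac_swap_right _ y z, map_neg,
    LinearMap.neg_apply] at h₂
  simp only [altJac]
  linear_combination (norm := module) -h₁ - h₂

theorem pfun_eq_altJac_sub (hM : IsMalcev μ) (x y z t : M) :
    pfun μ x y z t = altJac μ x y z t - μ (mjac μ y z t) x -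
      (3 : K) • (μ (μ (μ y z) x) t + μ (μ (μ z t) x) y + μ (μ (μ t y) x) z) := by
  have hp : pfun μ x y z t = altJac μ x y z t + (2 : K) • μ (mjac μ y z t) x +
      (3 : K) • (μ (μ x y) (μ z t) + μ (μ x z) (μ t y) + μ (μ x t) (μ y z)) := by
    have hJ := hM.mjac_mul_add_rotate x y z t
    have hK := hM.altJac_rotate x t y z
    simp only [altJac] at hK
    simp only [pfun, altJac, hM.mbr_eq_mjac_add, hM.anticomm y t, hM.anticomm z x,
      hM.anticomm (μ z t) (μ x y), map_neg, mjac_neg_left, hM.mjac_swap_right _ x z,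
      LinearMap.neg_apply, hM.anticomm (μ t y) (μ x z)]
    linear_combination (norm := module) -hJ + hK
  rw [hp, hM.mul_mul_add_rotate]
  module

theorem pfun_rotate (hM : IsMalcev μ) (x y z t : M) : pfun μ x y z t = pfun μ x z t y := by
  rw [hM.pfun_eq_altJac_sub, hM.pfun_eq_altJac_sub, hM.altJac_rotate, mjac_rotate y]
  module

theorem altJac_mul_left (hM : IsMalcev μ) (x w y z t : M) :
    altJac μ (μ x w) y z t =
      μ (mjac μ y z t) (μ x w) + μ (altJac μ w y z t) x - μ (altJac μ x y z t) w -
        (μ (mjac μ (μ y z) x w) t + μ (mjac μ (μ z t) x w) y + μ (mjac μ (μ t y) x w) z) := by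
  have h₁ := hM.mjac_mul_add_mjac_mul_s14 x (μ z t) w y
  have h₂ := hM.mjac_mul_add_mjac_mul_s14 (μ x w) z y t
  have h₃ := hM.mjac_mul_add_mjac_mul_s14 x (μ w y) z t
  have h₄ := hM.mjac_mul_add_mjac_mul_s14 z (μ t y) x w
  have h₅ := hM.mjac_mul_add_mjac_mul_s14 t (μ x z) y w
  have h₆ := congrArg (μ · w) (hM.altJac_rotate x y z t)
  have h₇ := congrArg (μ · t) (hM.altJac_rotate x z w y)
  simp only [altJac, map_add, map_neg, LinearMap.add_apply, LinearMap.neg_apply,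
    mjac_rotate _ (μ _ _), mjac_rotate t y z, mjac_neg_left, hM.anticomm t z, hM.anticomm w x,
    hM.anticomm z x, hM.anticomm y w, hM.mjac_swap_right _ z t, hM.mjac_swap_right _ x z,
    hM.mjac_swap_right _ x w, hM.mjac_swap_right _ y z, hM.mjac_swap_right _ w y,
    hM.mjac_swap_right _ y t, hM.mjac_swap_outer (μ w y) _ (μ z t),
    hM.mjac_swap_outer (μ w y) _ (μ x z), hM.mjac_swap_outer (μ x z) _ (μ t y)]
    at h₁ h₂ h₃ h₄ h₅ h₆ h₇ ⊢
  -- The Jacobians with two products among their arguments cancel.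
  linear_combination (norm := module) h₁ - h₂ + h₃ - h₄ + h₅ + h₆ - h₇

theorem altJac_eq_mbr_add (hM : IsMalcev μ) (x y z t : M) :
    altJac μ x y z t = mbr μ (μ x y) z t + mbr μ (μ z t) x y := by
  rw [hM.mbr_eq_mjac_add, hM.mbr_eq_mjac_add, hM.anticomm (μ z t), altJac]
  module

theorem pfun_mul_left (hM : IsMalcev μ) (x w y z t : M) :
    pfun μ (μ x w) y z t = μ (altJac μ w y z t) x - μ (altJac μ x y z t) w -
      (μ (mbr μ (μ y z) x w) t + μ (mbr μ (μ z t) x w) y + μ (mbr μ (μ t y) x w) z) := by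
  simp only [hM.pfun_eq_altJac_sub (μ x w), hM.altJac_mul_left, hM.mbr_eq_mjac_add, map_add,
    map_smul, LinearMap.add_apply, LinearMap.smul_apply]
  module

theorem mul_pfun_sub_pfun_mul (hM : IsMalcev μ) (x w y z t : M) :
    μ (pfun μ x y z t) w - pfun μ (μ x w) y z t =
      mh μ y x t z w + mh μ t z w x y - mh μ w y z x t := by
  -- Rotating `p(w,x,y,t)` matches the terms with last factor `z`; all others match literally.
  have hp := congrArg (μ · z) (hM.pfun_rotate w x y t)
  rw [hM.pfun_mul_left]
  simp only [hM.altJac_eq_mbr_add, pfun, mh, map_add, map_sub, map_neg, LinearMap.add_apply,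
    LinearMap.sub_apply, LinearMap.neg_apply, hM.anticomm y x, hM.anticomm t z,
    hM.anticomm t x, hM.anticomm w x, hM.anticomm y t, hM.anticomm y w, mbr_neg_left,
    hM.mbr_swap_right _ x w, hM.mbr_swap_right _ z t, hM.mbr_swap_right _ y z,
    hM.mbr_swap_right _ x z, hM.mbr_swap_right _ y w, hM.mbr_swap_right _ x y,
    hM.mbr_swap_right _ w t] at hp ⊢
  linear_combination (norm := module) -hp

theorem pfun_mul_left_of_inVarietyH (hM : IsMalcev μ) (hH : InVarietyH μ) (x w y z t : M) :
    pfun μ (μ x w) y z t = μ (pfun μ x y z t) w := by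
  have h := hM.mul_pfun_sub_pfun_mul x w y z t
  rw [hH, hH, hH, add_zero, sub_zero, sub_eq_zero] at h
  exact h.symm

theorem mem_centroid_of_map_mul_left (hM : IsMalcev μ) {α : Module.End K M}
    (hα : ∀ x w, α (μ x w) = μ (α x) w) : α ∈ centroid μ := by
  refine fun x w => ⟨?_, hα x w⟩
  rw [hM.anticomm x w, map_neg, hα, hM.anticomm x]

theorem Uspan_subset_centroid (hM : IsMalcev μ) (hH : InVarietyH μ) :
    (Uspan μ L : Set (Module.End K M)) ⊆ centroid μ := by
  refine span_subset_centroid ?_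
  rintro α ⟨y, a, -, b, -, hα⟩
  refine hM.mem_centroid_of_map_mul_left fun x w => ?_
  rw [hα, hα, hM.pfun_mul_left_of_inVarietyH hH]

theorem mul_eq_zero_of_mem_NMspan (hM : IsMalcev μ) (hH : InVarietyH μ) {m n : M}
    (hm : m ∈ AnnSet μ L) (hn : n ∈ NMspan μ L) : μ m n = 0 := by
  have hle : NMspan μ L ≤ LinearMap.ker (μ m) := by
    refine Submodule.span_le.2 ?_
    rintro _ ⟨a, ha, α, hα, rfl⟩
    exact mul_apply_eq_zero_of_mem_centroid (hM.Uspan_subset_centroid hH hα) (hm a ha)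
  exact hle hn

theorem mul_mul_mul_eq_sub_of_mul_eq_zero (hM : IsMalcev μ) {m a b : M} (ha : μ m a = 0)
    (hb : μ m b = 0) (v : M) :
    μ (μ v m) (μ a b) = μ (μ (μ v a) m) b - μ (μ (μ v b) a) m := by
  have h := hM.2 v a m b
  rw [hM.anticomm a m, ha, hb, hM.anticomm b v] at h
  simpa only [neg_zero, map_zero, LinearMap.zero_apply, add_zero, map_neg, LinearMap.neg_apply,
    ← sub_eq_add_neg] using h

theorem mul_mul_mul_eq_add_of_mul_eq_zero (hM : IsMalcev μ) {m a b : M} (ha : μ m a = 0)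
    (hb : μ m b = 0) (v : M) :
    μ (μ (μ v m) a) b = μ (μ v (μ a b)) m + μ (μ (μ v b) m) a := by
  have h := hM.2 v m a b
  rw [ha, hb, hM.anticomm (μ a b) v, hM.anticomm b v] at h
  simp only [map_zero, LinearMap.zero_apply, add_zero, map_neg, LinearMap.neg_apply] at h
  linear_combination (norm := module) -h

theorem mbr_mul_left_of_mul_eq_zero (hM : IsMalcev μ) {m a b : M} (ha : μ m a = 0)
    (hb : μ m b = 0) (v : M) : mbr μ (μ v m) a b = μ (mbr μ v a b) m := by
  have hab := hM.mul_mul_mul_eq_sub_of_mul_eq_zero ha hb v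
  have hba := hM.mul_mul_mul_eq_sub_of_mul_eq_zero hb ha v
  have h := hM.mul_mul_mul_eq_add_of_mul_eq_zero ha hb v
  have h' := hM.mul_mul_mul_eq_add_of_mul_eq_zero hb ha v
  rw [hM.anticomm b a] at hba h'
  simp only [mbr, map_add, map_sub, map_neg, map_smul, LinearMap.add_apply,
    LinearMap.sub_apply, LinearMap.neg_apply, LinearMap.smul_apply] at hba h' ⊢
  linear_combination (norm := module) h - h' + hab - hba

theorem mul_mem_JMset (hM : IsMalcev μ) {m j : M} (hm : m ∈ AnnSet μ L) (hj : j ∈ JMset μ L) :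
    μ m j ∈ JMset μ L := by
  intro a ha b hb
  rw [hM.anticomm m j, mbr_neg_left, hM.mbr_mul_left_of_mul_eq_zero (hm a ha) (hm b hb),
    hj a ha b hb, map_zero, LinearMap.zero_apply, neg_zero]

theorem mul_mem_AnnSet (hM : IsMalcev μ) (hL : L ≤ Submodule.map₂ μ L L) {m m' : M}
    (hm : m ∈ AnnSet μ L) (hm' : m' ∈ AnnSet μ L) : μ m m' ∈ AnnSet μ L := by
  have hker : Submodule.map₂ μ L L ≤ LinearMap.ker (μ (μ m m')) := by
    refine Submodule.map₂_le.2 fun a ha b hb => ?_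
    rw [LinearMap.mem_ker, hM.mul_mul_mul_eq_sub_of_mul_eq_zero (hm' a ha) (hm' b hb),
      hm a ha, hm b hb]
    simp only [map_zero, LinearMap.zero_apply, sub_zero]
  exact fun a ha => hker (hL ha)

end IsMalcev

/-- The multiplication table of the standard basis of `sl₂`, with `EF = H/2` written without a
denominator; `E`, `H`, `F` may be linearly dependent. -/
structure Sl2Relations (μ : M →ₗ[K] M →ₗ[K] M) (E H F : M) : Prop where
  eh : μ E H = E
  fh : μ F H = -F
  two_ef : (2 : K) • μ E F = H

/-- A pair `u₁ = u(1)`, `u₂ = u(2)` on which `E`, `H`, `F` act as on the standard basis of the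
two-dimensional non-Lie Malcev module of `sl₂`. Linear independence is not part of the notion. -/
structure IsV2Pair (μ : M →ₗ[K] M →ₗ[K] M) (E H F u₁ u₂ : M) : Prop where
  u₁_e : μ u₁ E = u₂
  u₁_h : μ u₁ H = u₁
  u₁_f : μ u₁ F = 0
  u₂_e : μ u₂ E = 0
  u₂_h : μ u₂ H = -u₂
  u₂_f : μ u₂ F = -u₁

theorem Sl2Relations.span_le_map₂ {E H F : M} (hs : Sl2Relations μ E H F) (hE : E ∈ L)
    (hH : H ∈ L) (hF : F ∈ L) : Submodule.span K {E, H, F} ≤ Submodule.map₂ μ L L := by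
  have hEH := Submodule.apply_mem_map₂ μ hE hH
  have hEF := Submodule.smul_mem _ (2 : K) (Submodule.apply_mem_map₂ μ hE hF)
  have hFH := Submodule.neg_mem _ (Submodule.apply_mem_map₂ μ hF hH)
  rw [hs.eh] at hEH
  rw [hs.two_ef] at hEF
  rw [hs.fh, neg_neg] at hFH
  refine Submodule.span_le.2 ?_
  rintro x (rfl | rfl | rfl) <;> assumption

theorem IsV2Pair.mul_right {E H F u₁ u₂ m : M} (hu : IsV2Pair μ E H F u₁ u₂)
    (hM : IsMalcev μ) (hs : Sl2Relations μ E H F) (hE : μ m E = 0) (hH : μ m H = 0)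
    (hF : μ m F = 0) :
    μ (μ u₁ m) H = (-2 : K) • μ u₁ m ∧ μ (μ u₁ m) F = 0 ∧ μ (μ u₁ m) E = μ u₂ m ∧
      μ (μ u₂ m) H = (2 : K) • μ u₂ m ∧ μ (μ u₂ m) F = -μ u₁ m ∧ μ (μ u₂ m) E = 0 := by
  obtain ⟨h1e, h1h, h1f, h2e, h2h, h2f⟩ := hu
  have h₁H : μ (μ u₁ m) H = (-2 : K) • μ u₁ m := by
    have h := hM.mul_mul_mul_eq_sub_of_mul_eq_zero hF hE u₁
    simp only [hM.anticomm F E, h1e, h1f, h2f, map_zero, map_neg,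
      LinearMap.zero_apply, LinearMap.neg_apply] at h
    rw [← hs.two_ef, map_smul]
    linear_combination (norm := module) (-2 : K) • h
  have h₂H : μ (μ u₂ m) H = (2 : K) • μ u₂ m := by
    have h := hM.mul_mul_mul_eq_sub_of_mul_eq_zero hE hF u₂
    simp only [h1e, h2e, h2f, map_zero, map_neg, LinearMap.zero_apply, LinearMap.neg_apply] at h
    rw [← hs.two_ef, map_smul]
    linear_combination (norm := module) (2 : K) • h
  refine ⟨h₁H, ?_, ?_, h₂H, ?_, ?_⟩
  · simpa [hs.fh, h1h, h1f] using hM.mul_mul_mul_eq_sub_of_mul_eq_zero hF hH u₁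
  · have h := hM.mul_mul_mul_eq_sub_of_mul_eq_zero hE hH u₁
    rw [hs.eh, h1e, h1h, h1e, h₂H] at h
    linear_combination (norm := module) h
  · have h := hM.mul_mul_mul_eq_sub_of_mul_eq_zero hF hH u₂
    rw [hs.fh, h2f, h2h] at h
    simp only [map_neg, LinearMap.neg_apply, h₁H, h2f] at h
    linear_combination (norm := module) -h
  · simpa [hs.eh, h2e, h2h] using hM.mul_mul_mul_eq_sub_of_mul_eq_zero hE hH u₂

end

theorem stmt14_general
    (h2 : (2 : K) ≠ 0)
    (μ : M →ₗ[K] M →ₗ[K] M) (hMal : IsMalcev μ) (hVarH : InVarietyH μ)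
    (E H F : M)
    (hEH : μ E H = E) (hFH : μ F H = -F) (hEF : μ E F = (2⁻¹ : K) • H)
    (L : Submodule K M) (hL : L = Submodule.span K {E, H, F}) :
    (∀ m ∈ AnnSet μ L, ∀ m' ∈ AnnSet μ L, μ m m' ∈ AnnSet μ L) ∧
    (∀ m ∈ AnnSet μ L, ∀ a ∈ L, ∀ α ∈ centroid μ, μ m (α a) = 0) ∧
    (∀ m ∈ AnnSet μ L, ∀ n ∈ NMspan μ L, μ m n = 0) ∧
    (∀ m ∈ AnnSet μ L, ∀ u1 u2 : M,
      μ u1 E = u2 → μ u1 H = u1 → μ u1 F = 0 →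
      μ u2 E = 0 → μ u2 H = -u2 → μ u2 F = -u1 →
        μ (μ u1 m) H = (-2 : K) • μ u1 m ∧
        μ (μ u1 m) F = 0 ∧
        μ (μ u1 m) E = μ u2 m ∧
        μ (μ u2 m) H = (2 : K) • μ u2 m ∧
        μ (μ u2 m) F = -(μ u1 m) ∧
        μ (μ u2 m) E = 0) ∧
    (∀ m ∈ AnnSet μ L, ∀ j ∈ JMset μ L, μ m j ∈ JMset μ L) := by
  have hs : Sl2Relations μ E H F := ⟨hEH, hFH, by rw [hEF, smul_inv_smul₀ h2]⟩
  have hE : E ∈ L := hL ▸ Submodule.subset_span (by simp)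
  have hH : H ∈ L := hL ▸ Submodule.subset_span (by simp)
  have hF : F ∈ L := hL ▸ Submodule.subset_span (by simp)
  refine ⟨fun m hm m' hm' => hMal.mul_mem_AnnSet (hL.trans_le (hs.span_le_map₂ hE hH hF)) hm hm',
    fun m hm a ha α hα => mul_apply_eq_zero_of_mem_centroid hα (hm a ha),
    fun m hm n hn => hMal.mul_eq_zero_of_mem_NMspan hVarH hm hn, ?_,
    fun m hm j hj => hMal.mul_mem_JMset hm hj⟩
  intro m hm u1 u2 h1E h1H h1F h2E h2H h2F
  have hu : IsV2Pair μ E H F u1 u2 := ⟨h1E, h1H, h1F, h2E, h2H, h2F⟩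
  exact hu.mul_right hMal hs (hm E hE) (hm H hH) (hm F hF)

/-- (i) `Ann_M L` is a subalgebra; (ii) `(Ann_M L)·(aα) = 0` for
`a ∈ L`, `α ∈ Γ(M)`, in particular `(Ann_M L)·N_M = 0`; (iii) for `m ∈ Ann_M L` and a
`V₂`-pair `(u(1), u(2))`, the elements `u(1)m, u(2)m` form another `V₂`-pair;
consequently `(Ann_M L)·J_M ⊆ J_M`. -/
theorem stmt14
    (h2 : (2 : K) ≠ 0) (h3 : (3 : K) ≠ 0)
    (μ : M →ₗ[K] M →ₗ[K] M) (hMal : IsMalcev μ) (hVarH : InVarietyH μ)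
    (E H F : M) (hind : LinearIndependent K ![E, H, F])
    (hEH : μ E H = E) (hFH : μ F H = -F) (hEF : μ E F = (2⁻¹ : K) • H)
    (L : Submodule K M) (hL : L = Submodule.span K {E, H, F}) :
    (∀ m ∈ AnnSet μ L, ∀ m' ∈ AnnSet μ L, μ m m' ∈ AnnSet μ L) ∧
    (∀ m ∈ AnnSet μ L, ∀ a ∈ L, ∀ α ∈ centroid μ, μ m (α a) = 0) ∧
    (∀ m ∈ AnnSet μ L, ∀ n ∈ NMspan μ L, μ m n = 0) ∧
    (∀ m ∈ AnnSet μ L, ∀ u1 u2 : M,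
      μ u1 E = u2 → μ u1 H = u1 → μ u1 F = 0 →
      μ u2 E = 0 → μ u2 H = -u2 → μ u2 F = -u1 →
        μ (μ u1 m) H = (-2 : K) • μ u1 m ∧
        μ (μ u1 m) F = 0 ∧
        μ (μ u1 m) E = μ u2 m ∧
        μ (μ u2 m) H = (2 : K) • μ u2 m ∧
        μ (μ u2 m) F = -(μ u1 m) ∧
        μ (μ u2 m) E = 0) ∧
    (∀ m ∈ AnnSet μ L, ∀ j ∈ JMset μ L, μ m j ∈ JMset μ L) :=
  stmt14_general h2 μ hMal hVarH E H F hEH hFH hEF L hL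

end
end
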